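/- arXiv:1205.6727 — 2 statements merged into one kernel-verified Lean document; each statement's English description precedes it below -/
import Mathlib

section
/- Let $n \ge 1$ and let $A$ be an $n\times n$ real matrix with nonnegative entries such that every row and every column of $A$ contains a positive entry. Define $f : \mathbb{R}^n \to \mathbb{R}^n$ by $$f_i(x) = \tfrac12\Big(\log\Big(\sum_{j=1}^n A_{ji} e^{x_j}\Big) - \log\Big(\sum_{j=1}^n A_{ij} e^{-x_j}\Big)\Big), \qquad 1 \le i \le n.$$ Let $p \in \mathbb{R}^n$. Then $f(p) = p$ if and only if the pair $(p, \mu)$ with $\mu = -\log\big(\sum_{i,j=1}^n A_{ij} e^{p_i - p_j}\big)$ is a global minimizer of the dual function $\theta(q, \nu) = \sum_{i,j=1}^n A_{ij} e^{q_i - q_j + \nu} - \nu$ over $\mathbb{R}^n \times \mathbb{R}$. Moreover, in that case the matrix $\rho$ defined by $\rho_{ij} = e^{\mu} e^{p_i} A_{ij} e^{-p_j}$ is a global maximizer of the entropy objective $-\sum_{(i,j):\, A_{ij}>0} \rho_{ij}\big(\log(\rho_{ij}/A_{ij}) - 1\big)$ over the set of matrices $\rho \in \mathbb{R}^{n\times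 n}$ with $\rho_{ij} \ge 0$, $\rho_{ij} = 0$ whenever $A_{ij} = 0$, $\sum_{j} \rho_{ij} = \sum_{j} \rho_{ji}$ for every $i$, and $\sum_{i,j} \rho_{ij} = 1$ (with the convention $0\cdot\log 0 = 0$). -/
/-- The ideal HOTS map. -/
noncomputable def hotsMap {n : ℕ} (A : Matrix (Fin n) (Fin n) ℝ) (x : Fin n → ℝ) : Fin n → ℝ :=
  fun i => (1 / 2) * (Real.log (∑ j, A j i * Real.exp (x j))
    - Real.log (∑ j, A i j * Real.exp (-(x j))))

/-- The dual function `θ(q, ν) = Σ_{i,j} A_{ij} e^{q_i − q_j + ν} − ν`. -/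
noncomputable def dualTheta {n : ℕ} (A : Matrix (Fin n) (Fin n) ℝ) (q : Fin n → ℝ) (ν : ℝ) : ℝ :=
  (∑ i, ∑ j, A i j * Real.exp (q i - q j + ν)) - ν

/-- The feasible set of the entropy maximization problem: nonnegative flows
supported on the pattern of `A`, balanced at every node, of total mass 1. -/
def FeasibleCirculation {n : ℕ} (A ρ : Matrix (Fin n) (Fin n) ℝ) : Prop :=
  (∀ i j, 0 ≤ ρ i j) ∧ (∀ i j, A i j = 0 → ρ i j = 0) ∧
  (∀ i, ∑ j, ρ i j = ∑ j, ρ j i) ∧ (∑ i, ∑ j, ρ i j = 1)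

/-- The entropy objective `−Σ_{(i,j): A_{ij}>0} ρ_{ij}(log(ρ_{ij}/A_{ij}) − 1)`
(with the convention `0 log 0 = 0`, which holds automatically since `Real.log 0 = 0`). -/
noncomputable def entropyObj {n : ℕ} (A ρ : Matrix (Fin n) (Fin n) ℝ) : ℝ :=
  -∑ i, ∑ j, if 0 < A i j then ρ i j * (Real.log (ρ i j / A i j) - 1) else 0

/-!
Put `g i j = e^μ e^{p i} A i j e^{-p j}`, the maximizer of the Lagrangian of the entropy problem at
the multipliers `(p, μ)`. Comparing its row and column sums shows that `p` is fixed by the HOTS map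
exactly when `g` is balanced. The derivative of the dual function at `(p, μ)` in the direction
`(d, t)` is `∑ g i j (d i - d j + t) - t`, so `(p, μ)` is stationary exactly when `g` is balanced
and has total mass one. Conversely, the Fenchel-Young inequality for the exponential, summed over
all entries, bounds the entropy of every feasible circulation by every value of the dual function,
with equality for `g`: hence feasibility of `g` makes both `(p, μ)` and `g` optimal.
-/

open Real

section Balanced

variable {ι R : Type*} [Fintype ι]

/-- A matrix whose `i`-th row and `i`-th column have the same sum for every `i`; read as a flow from
`i` to `j`, it satisfies Kirchhoff's law at every node. -/
def IsBalanced [AddCommMonoid R] (ρ : Matrix ι ι R) : Prop :=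
  ∀ i, ∑ j, ρ i j = ∑ j, ρ j i

theorem sum_mul_sub_eq_dotProduct [NonUnitalNonAssocRing R] (ρ : Matrix ι ι R) (d : ι → R) :
    ∑ i, ∑ j, ρ i j * (d i - d j) = (fun i ↦ ∑ j, ρ i j - ∑ j, ρ j i) ⬝ᵥ d := by
  simp only [dotProduct, mul_sub, sub_mul, Finset.sum_sub_distrib, Finset.sum_mul]
  rw [Finset.sum_comm (f := fun i j ↦ ρ i j * d j)]

theorem isBalanced_iff_sum_mul_sub_eq_zero [Ring R] {ρ : Matrix ι ι R} :
    IsBalanced ρ ↔ ∀ d : ι → R, ∑ i, ∑ j, ρ i j * (d i - d j) = 0 := by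
  simp only [sum_mul_sub_eq_dotProduct, dotProduct_eq_zero_iff, funext_iff, Pi.zero_apply,
    sub_eq_zero, IsBalanced]

end Balanced

section RealInequalities

theorem half_log_sub_log_eq_iff {a b : ℝ} (ha : 0 < a) (hb : 0 < b) (x : ℝ) :
    1 / 2 * (log a - log b) = x ↔ exp x * b = exp (-x) * a := by
  rw [← log_injOn_pos.eq_iff (mul_pos (exp_pos x) hb) (mul_pos (exp_pos (-x)) ha),
    log_mul (exp_ne_zero _) hb.ne', log_mul (exp_ne_zero _) ha.ne', log_exp, log_exp]
  constructor <;> intro h <;> linarith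

theorem sum_mul_exp_pos {ι : Type*} [Fintype ι] {a : ι → ℝ} (ha : ∀ i, 0 ≤ a i)
    (hpos : ∃ i, 0 < a i) (x : ι → ℝ) : 0 < ∑ i, a i * exp (x i) := by
  obtain ⟨k, hk⟩ := hpos
  exact Finset.sum_pos' (fun i _ ↦ mul_nonneg (ha i) (exp_pos _).le)
    ⟨k, Finset.mem_univ k, mul_pos hk (exp_pos _)⟩

theorem mul_le_mul_exp_add_mul_log_div_sub_one {a x : ℝ} (ha : 0 < a) (hx : 0 ≤ x) (c : ℝ) :
    x * c ≤ a * exp c + x * (log (x / a) - 1) := by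
  rcases hx.eq_or_lt with rfl | hx
  · simpa only [zero_mul, add_zero] using (mul_pos ha (exp_pos c)).le
  calc x * c = x * (c - log (x / a) + 1) + x * (log (x / a) - 1) := by ring
    _ ≤ x * exp (c - log (x / a)) + x * (log (x / a) - 1) := by
      gcongr
      exact add_one_le_exp _
    _ = a * exp c + x * (log (x / a) - 1) := by
      rw [exp_sub, exp_log (div_pos hx ha)]
      field_simp

end RealInequalities

section GibbsMatrix

variable {ι : Type*}

/-- The diagonal scaling `e^μ D A D⁻¹` of `A` with `D = diag (e^p)`: the candidate optimal
circulation attached to the dual variables `(p, μ)`. -/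
noncomputable def gibbsMatrix (A : Matrix ι ι ℝ) (p : ι → ℝ) (μ : ℝ) : Matrix ι ι ℝ :=
  .of fun i j ↦ exp μ * (exp (p i) * A i j * exp (-(p j)))

theorem gibbsMatrix_apply (A : Matrix ι ι ℝ) (p : ι → ℝ) (μ : ℝ) (i j : ι) :
    gibbsMatrix A p μ i j = A i j * exp (p i - p j + μ) := by
  rw [gibbsMatrix, Matrix.of_apply, exp_add, sub_eq_add_neg, exp_add]
  ring

variable [Fintype ι]

theorem sum_row_gibbsMatrix (A : Matrix ι ι ℝ) (p : ι → ℝ) (μ : ℝ) (i : ι) :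
    ∑ j, gibbsMatrix A p μ i j = exp μ * (exp (p i) * ∑ j, A i j * exp (-(p j))) := by
  simp only [gibbsMatrix, Matrix.of_apply, Finset.mul_sum, mul_assoc]

theorem sum_col_gibbsMatrix (A : Matrix ι ι ℝ) (p : ι → ℝ) (μ : ℝ) (i : ι) :
    ∑ j, gibbsMatrix A p μ j i = exp μ * (exp (-(p i)) * ∑ j, A j i * exp (p j)) := by
  simp only [gibbsMatrix, Matrix.of_apply, Finset.mul_sum]
  exact Finset.sum_congr rfl fun j _ ↦ by ring

theorem sum_gibbsMatrix_neg_log {A : Matrix ι ι ℝ} {p : ι → ℝ}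
    (hpos : 0 < ∑ i, ∑ j, A i j * exp (p i - p j)) :
    ∑ i, ∑ j, gibbsMatrix A p (-log (∑ i, ∑ j, A i j * exp (p i - p j))) i j = 1 := by
  simp only [gibbsMatrix_apply, exp_add, ← mul_assoc, ← Finset.sum_mul]
  rw [exp_neg, exp_log hpos, mul_inv_cancel₀ hpos.ne']

end GibbsMatrix

section Duality

variable {n : ℕ} {A : Matrix (Fin n) (Fin n) ℝ}

theorem isBalanced_gibbsMatrix_iff_hotsMap_eq (hA : ∀ i j, 0 ≤ A i j)
    (hrow : ∀ i, ∃ j, 0 < A i j) (hcol : ∀ j, ∃ i, 0 < A i j) (p : Fin n → ℝ) (μ : ℝ) :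
    IsBalanced (gibbsMatrix A p μ) ↔ hotsMap A p = p := by
  rw [funext_iff]
  refine forall_congr' fun i ↦ ?_
  rw [sum_row_gibbsMatrix, sum_col_gibbsMatrix, mul_right_inj' (exp_ne_zero μ)]
  exact (half_log_sub_log_eq_iff (sum_mul_exp_pos (fun j ↦ hA j i) (hcol i) _)
    (sum_mul_exp_pos (hA i) (hrow i) _) (p i)).symm

theorem feasibleCirculation_gibbsMatrix_iff (hA : ∀ i j, 0 ≤ A i j) (p : Fin n → ℝ) (μ : ℝ) :
    FeasibleCirculation A (gibbsMatrix A p μ) ↔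
      IsBalanced (gibbsMatrix A p μ) ∧ ∑ i, ∑ j, gibbsMatrix A p μ i j = 1 := by
  refine ⟨fun h ↦ h.2.2, fun h ↦ ⟨fun i j ↦ ?_, fun i j hij ↦ ?_, h⟩⟩
  · rw [gibbsMatrix_apply]
    exact mul_nonneg (hA i j) (exp_pos _).le
  · rw [gibbsMatrix_apply, hij, zero_mul]

theorem FeasibleCirculation.sum_mul_sub_add {ρ : Matrix (Fin n) (Fin n) ℝ}
    (hρ : FeasibleCirculation A ρ) (q : Fin n → ℝ) (ν : ℝ) :
    ∑ i, ∑ j, ρ i j * (q i - q j + ν) = ν := by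
  obtain ⟨-, -, hbal, hmass⟩ := hρ
  simp only [mul_add, Finset.sum_add_distrib, ← Finset.sum_mul, hmass,
    isBalanced_iff_sum_mul_sub_eq_zero.1 hbal q, zero_add, one_mul]

theorem FeasibleCirculation.entropyObj_le_dualTheta (hA : ∀ i j, 0 ≤ A i j)
    {ρ : Matrix (Fin n) (Fin n) ℝ} (hρ : FeasibleCirculation A ρ) (q : Fin n → ℝ) (ν : ℝ) :
    entropyObj A ρ ≤ dualTheta A q ν := by
  have hterm (i j : Fin n) : ρ i j * (q i - q j + ν) ≤ A i j * exp (q i - q j + ν) +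
      if 0 < A i j then ρ i j * (log (ρ i j / A i j) - 1) else 0 := by
    split_ifs with hij
    · exact mul_le_mul_exp_add_mul_log_div_sub_one hij (hρ.1 i j) _
    · have hzero : A i j = 0 := (hA i j).eq_of_not_lt' hij
      simp only [hzero, hρ.2.1 i j hzero, zero_mul, add_zero, le_refl]
  have hsum := Finset.sum_le_sum fun i (_ : i ∈ Finset.univ) ↦
    Finset.sum_le_sum fun j (_ : j ∈ Finset.univ) ↦ hterm i j
  simp only [Finset.sum_add_distrib] at hsum
  rw [hρ.sum_mul_sub_add] at hsum
  rw [entropyObj, dualTheta]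
  linarith

theorem entropyObj_gibbsMatrix (hA : ∀ i j, 0 ≤ A i j) (p : Fin n → ℝ) (μ : ℝ) :
    entropyObj A (gibbsMatrix A p μ) = ∑ i, ∑ j, gibbsMatrix A p μ i j -
      ∑ i, ∑ j, gibbsMatrix A p μ i j * (p i - p j + μ) := by
  simp only [entropyObj, ← Finset.sum_neg_distrib, ← Finset.sum_sub_distrib]
  refine Finset.sum_congr rfl fun i _ ↦ Finset.sum_congr rfl fun j _ ↦ ?_
  rw [gibbsMatrix_apply]
  split_ifs with hij
  · rw [mul_div_cancel_left₀ _ hij.ne', log_exp]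
    ring
  · have hzero : A i j = 0 := (hA i j).eq_of_not_lt' hij
    simp only [hzero, zero_mul, neg_zero, sub_zero]

theorem entropyObj_gibbsMatrix_eq_dualTheta (hA : ∀ i j, 0 ≤ A i j) {p : Fin n → ℝ} {μ : ℝ}
    (hfeas : FeasibleCirculation A (gibbsMatrix A p μ)) :
    entropyObj A (gibbsMatrix A p μ) = dualTheta A p μ := by
  rw [entropyObj_gibbsMatrix hA, hfeas.sum_mul_sub_add]
  simp only [gibbsMatrix_apply, dualTheta]

theorem hasDerivAt_dualTheta_add_mul (A : Matrix (Fin n) (Fin n) ℝ) (p d : Fin n → ℝ) (μ t : ℝ) :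
    HasDerivAt (fun s : ℝ ↦ dualTheta A (fun i ↦ p i + s * d i) (μ + s * t))
      (∑ i, ∑ j, gibbsMatrix A p μ i j * (d i - d j + t) - t) 0 := by
  have hline (a b : ℝ) : HasDerivAt (fun s : ℝ ↦ a + s * b) b 0 :=
    (hasDerivAt_mul_const b).const_add a
  have hterm (i j : Fin n) : HasDerivAt
      (fun s : ℝ ↦ A i j * exp (p i + s * d i - (p j + s * d j) + (μ + s * t)))
      (gibbsMatrix A p μ i j * (d i - d j + t)) 0 := by
    simpa [gibbsMatrix_apply, mul_assoc] using
      ((((hline (p i) (d i)).sub (hline (p j) (d j))).add (hline μ t)).exp).const_mul (A i j)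
  exact (HasDerivAt.fun_sum fun i _ ↦ HasDerivAt.fun_sum fun j _ ↦ hterm i j).sub (hline μ t)

theorem sum_gibbsMatrix_mul_eq_of_forall_dualTheta_le {p : Fin n → ℝ} {μ : ℝ}
    (hmin : ∀ q ν, dualTheta A p μ ≤ dualTheta A q ν) (d : Fin n → ℝ) (t : ℝ) :
    ∑ i, ∑ j, gibbsMatrix A p μ i j * (d i - d j + t) = t := by
  have hloc : IsLocalMin (fun s : ℝ ↦ dualTheta A (fun i ↦ p i + s * d i) (μ + s * t)) 0 :=
    .of_forall fun s ↦ by simpa only [zero_mul, add_zero] using hmin _ _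
  exact sub_eq_zero.1 (hloc.hasDerivAt_eq_zero (hasDerivAt_dualTheta_add_mul A p d μ t))

theorem feasibleCirculation_gibbsMatrix_iff_forall_dualTheta_le (hA : ∀ i j, 0 ≤ A i j)
    (p : Fin n → ℝ) (μ : ℝ) :
    FeasibleCirculation A (gibbsMatrix A p μ) ↔ ∀ q ν, dualTheta A p μ ≤ dualTheta A q ν := by
  constructor
  · intro hfeas q ν
    rw [← entropyObj_gibbsMatrix_eq_dualTheta hA hfeas]
    exact hfeas.entropyObj_le_dualTheta hA q ν
  · intro hmin
    have hstat := sum_gibbsMatrix_mul_eq_of_forall_dualTheta_le hmin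
    refine (feasibleCirculation_gibbsMatrix_iff hA p μ).2
      ⟨isBalanced_iff_sum_mul_sub_eq_zero.2 fun d ↦ ?_, ?_⟩
    · simpa only [add_zero] using hstat d 0
    · simpa only [Pi.zero_apply, sub_zero, zero_add, mul_one] using hstat 0 1

end Duality

theorem hots_fixedPoint_iff_dual_minimizer {n : ℕ} (hn : 0 < n) (A : Matrix (Fin n) (Fin n) ℝ)
    (hA : ∀ i j, 0 ≤ A i j)
    (hrow : ∀ i, ∃ j, 0 < A i j) (hcol : ∀ j, ∃ i, 0 < A i j) (p : Fin n → ℝ) :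
    (hotsMap A p = p ↔
      ∀ (q : Fin n → ℝ) (ν : ℝ),
        dualTheta A p (-Real.log (∑ i, ∑ j, A i j * Real.exp (p i - p j))) ≤ dualTheta A q ν) ∧
    (hotsMap A p = p →
      FeasibleCirculation A (fun i j =>
        Real.exp (-Real.log (∑ i, ∑ j, A i j * Real.exp (p i - p j))) *
          (Real.exp (p i) * A i j * Real.exp (-(p j)))) ∧
      ∀ ρ : Matrix (Fin n) (Fin n) ℝ, FeasibleCirculation A ρ →
        entropyObj A ρ ≤ entropyObj A (fun i j =>
          Real.exp (-Real.log (∑ i, ∑ j, A i j * Real.exp (p i - p j))) *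
            (Real.exp (p i) * A i j * Real.exp (-(p j))))) := by
  set μ := -log (∑ i, ∑ j, A i j * exp (p i - p j))
  have hmass : ∑ i, ∑ j, gibbsMatrix A p μ i j = 1 :=
    sum_gibbsMatrix_neg_log <| Finset.sum_pos
      (fun i _ ↦ sum_mul_exp_pos (hA i) (hrow i) _) ⟨⟨0, hn⟩, Finset.mem_univ _⟩
  have hfix : hotsMap A p = p ↔ FeasibleCirculation A (gibbsMatrix A p μ) := by
    rw [feasibleCirculation_gibbsMatrix_iff hA, and_iff_left hmass,
      isBalanced_gibbsMatrix_iff_hotsMap_eq hA hrow hcol]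
  refine ⟨hfix.trans (feasibleCirculation_gibbsMatrix_iff_forall_dualTheta_le hA p μ), fun hp ↦ ?_⟩
  have hfeas : FeasibleCirculation A (gibbsMatrix A p μ) := hfix.1 hp
  refine ⟨hfeas, fun ρ hρ ↦ ?_⟩
  calc entropyObj A ρ ≤ dualTheta A p μ := hρ.entropyObj_le_dualTheta hA p μ
    _ = entropyObj A (gibbsMatrix A p μ) := (entropyObj_gibbsMatrix_eq_dualTheta hA hfeas).symm
end

section
/- Let $A$ be an $n\times n$ real matrix ($n\ge 1$) with nonnegative entries, and let $L, U$ be $n\times n$ matrices with $L_{ij}\in\mathbb{R}$, $U_{ij}\in\mathbb{R}\cup\{+\infty\}$ and $0\le L_{ij}\le U_{ij}$ for all $i,j$; assume that every row and every column contains a position $(i,j)$ with $L_{ij}>0$ or with both $A_{ij}>0$ and $U_{ij}>0$ (so that the sums under the logarithms below are positive). Put $\mathrm{mid}(x,a,b)=\max(\min(x,a),b)$, define the truncation operator $T$ by $T(X)_{ij}=\mathrm{mid}(X_{ij},U_{ij},L_{ij})$, and say that a diagonal matrix $D$ with positive diagonal entries is a solution of the truncated scaling problem if $X=T(D^{-1}AD)$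 satisfies $\sum_k X_{ik}=\sum_j X_{ji}$ for all $i$; $A$ has a truncated scaling if such a $D$ exists. Consider a sequence $(p^k)_{k\ge 0}$ in $\mathbb{R}^n$ generated by exact cyclic coordinate descent from an arbitrary $p^0$: the coordinates are selected cyclically in some fixed order, and if $l$ is the coordinate selected at step $k$, then $p^{k+1}$ agrees with $p^k$ in all coordinates except $l$, and $$p_l^{k+1}=\tfrac12\log\Big(\sum_{i=1}^n \mathrm{mid}\big(A_{il}e^{p_i^k},\,U_{il}e^{p_l^k},\,L_{il}e^{p_l^k}\big)\Big)-\tfrac12\log\Big(\sum_{j=1}^n \mathrm{mid}\big(A_{lj}e^{-p_j^k},\,U_{lj}e^{-p_l^k},\,L_{lj}e^{-p_l^k}\big)\Big).$$ If $A$ has a truncated scaling, then $(p^k)$ converges at least linearly to a vector $p^*$ (that is, $\|p^k-p^*\|\le C\rho^k$ for all $k$, with constants $C$ and $0\le\rho<1$) such that $D=\mathrm{diag}(e^{-p^*})$ is a solution of the truncated scaling problem, i.e. $X=T(D^{-1}AD)$ satisfies $\sum_k X_{ik}=\sum_j X_{ji}$ for all $i$. -/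
/-- `mid(x, a, b) = max(min(x, a), b)`, where the upper bound `a` may be `+∞`. The extended real
`max (min x a) b` lies between `b` and `max x b`, so it is a real number and `toReal` only changes
its type. -/
noncomputable def mid (x : ℝ) (a : EReal) (b : ℝ) : ℝ :=
  (max (min (x : EReal) a) (b : EReal)).toReal

/-- The truncation operator `T(X)_{ij} = max(min(X_{ij}, U_{ij}), L_{ij})`. -/
noncomputable def truncation {n : ℕ} (L : Matrix (Fin n) (Fin n) ℝ)
    (U : Matrix (Fin n) (Fin n) EReal) (X : Matrix (Fin n) (Fin n) ℝ) :
    Matrix (Fin n) (Fin n) ℝ :=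
  Matrix.of fun i j => mid (X i j) (U i j) (L i j)

/-- `D = diag(d)`, with positive diagonal entries, solves the truncated scaling problem:
`X = T(D⁻¹ A D)` satisfies `∑_k X_{ik} = ∑_j X_{ji}` for all `i`. -/
def IsTruncScaling {n : ℕ} (A L : Matrix (Fin n) (Fin n) ℝ)
    (U : Matrix (Fin n) (Fin n) EReal) (d : Fin n → ℝ) : Prop :=
  (∀ i, 0 < d i) ∧
  ∀ i, ∑ k, truncation L U ((Matrix.diagonal d)⁻¹ * A * Matrix.diagonal d) i k =
    ∑ j, truncation L U ((Matrix.diagonal d)⁻¹ * A * Matrix.diagonal d) j i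

/-- The new value of the coordinate `l` in a step of the exact coordinate descent at `p`. -/
noncomputable def truncUpdate {n : ℕ} (A L : Matrix (Fin n) (Fin n) ℝ)
    (U : Matrix (Fin n) (Fin n) EReal) (p : Fin n → ℝ) (l : Fin n) : ℝ :=
  (1 / 2) * Real.log (∑ i, mid (A i l * Real.exp (p i))
      (U i l * (Real.exp (p l) : EReal)) (L i l * Real.exp (p l)))
    - (1 / 2) * Real.log (∑ j, mid (A l j * Real.exp (-(p j)))
      (U l j * (Real.exp (-(p l)) : EReal)) (L l j * Real.exp (-(p l))))

/-!
Write the entries of `T(D⁻¹ A D)`, `D = diag (e^{-p})`, as `ψ i j (p i - p j)`, with `ψ i j`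
nonnegative, monotone and growing at most like the exponential. The differences of row and column
sums are then the gradient of a convex potential in `p`, and a descent step decreases the potential
by at least a multiple of its squared length. A step is also order preserving and commutes with
adding a constant to all coordinates, so it is nonexpansive in the supremum norm: the distance of
the iterates to any balanced vector is antitone. Hence the iterates stay bounded, and every cluster
point, being balanced, is their limit.

The rate comes from an error bound. Each `ψ i j` is, on either side of a point, locally constant or
at least linearly increasing. So, near a balanced `s`, the balanced vectors include the solutions of
those inequalities `p i - s i ≤ p j - s j` whose violation would change an entry, and each `p`
satisfies these inequalities up to a multiple of its imbalance. Hoffman's bound then yields a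
balanced vector at distance `O(‖imbalance‖)` from `p`, so that by convexity the gap in the potential
is `O(‖imbalance‖²)`. As the imbalance is bounded by the total length of the next cycle of steps,
the decrease of the potential over a cycle is a fixed proportion of the gap.
-/

open Filter Finset Topology Asymptotics

section Sequences

theorem sum_range_mul_sq_le_sub {a d : ℕ → ℝ} {c : ℝ}
    (h : ∀ k, c * d k ^ 2 ≤ a k - a (k + 1)) (k n : ℕ) :
    ∑ j ∈ range n, c * d (k + j) ^ 2 ≤ a k - a (k + n) :=
  (sum_le_sum fun j _ => h (k + j)).trans_eq (sum_range_sub' (fun j => a (k + j)) n)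

theorem tendsto_zero_of_mul_sq_le_sub {a d : ℕ → ℝ} {c : ℝ} (hc : 0 < c) (ha : ∀ k, 0 ≤ a k)
    (h : ∀ k, c * d k ^ 2 ≤ a k - a (k + 1)) : Tendsto d atTop (𝓝 0) := by
  have hsum : Summable fun k => c * d k ^ 2 :=
    summable_of_sum_range_le (c := a 0) (fun k => by positivity) fun n => by
      simpa using (sum_range_mul_sq_le_sub h 0 n).trans (sub_le_self _ (ha _))
  have hsq := ((summable_mul_left_iff hc.ne').1 hsum).tendsto_atTop_zero
  rw [tendsto_zero_iff_abs_tendsto_zero]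
  simpa [Function.comp_def, Real.sqrt_sq_eq_abs] using hsq.sqrt

theorem exists_le_mul_pow_of_add_le_mul {a : ℕ → ℝ} (ha₀ : ∀ k, 0 ≤ a k) (ha : Antitone a)
    {n : ℕ} (hn : 0 < n) {θ : ℝ} (hθ₀ : 0 < θ) (hθ₁ : θ < 1)
    (h : ∀ᶠ k in atTop, a (k + n) ≤ θ * a k) :
    ∃ C ρ : ℝ, 0 ≤ C ∧ 0 < ρ ∧ ρ < 1 ∧ ∀ k, a k ≤ C * ρ ^ k := by
  obtain ⟨K, hK⟩ := eventually_atTop.1 h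
  obtain ⟨ρ, hρ₀, hρn⟩ : ∃ ρ : ℝ, 0 < ρ ∧ ρ ^ n = θ :=
    ⟨θ ^ (n : ℝ)⁻¹, Real.rpow_pos_of_pos hθ₀ _, Real.rpow_inv_natCast_pow hθ₀.le hn.ne'⟩
  have hρ₁ : ρ < 1 := (pow_lt_one_iff_of_nonneg hρ₀.le hn.ne').1 (hρn ▸ hθ₁)
  refine ⟨a 0 / ρ ^ (K + n), ρ, div_nonneg (ha₀ 0) (by positivity), hρ₀, hρ₁, fun k => ?_⟩
  induction k using Nat.strong_induction_on with
  | _ k ih =>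
    rcases lt_or_ge k (K + n) with hk | hk
    · rw [div_mul_eq_mul_div, le_div_iff₀ (by positivity)]
      exact mul_le_mul (ha k.zero_le) (pow_le_pow_of_le_one hρ₀.le hρ₁.le hk.le)
        (by positivity) (ha₀ 0)
    · obtain ⟨m, rfl⟩ : ∃ m, k = m + n := ⟨k - n, by omega⟩
      calc a (m + n) ≤ θ * a m := hK m (by omega)
        _ ≤ θ * (a 0 / ρ ^ (K + n) * ρ ^ m) := by gcongr; exact ih m (by omega)
        _ = a 0 / ρ ^ (K + n) * ρ ^ (m + n) := by rw [pow_add ρ m n, hρn]; ring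

theorem exists_add_le_mul_of_le_mul_sq_sum {a d : ℕ → ℝ} (ha : Antitone a) {b c : ℝ}
    (hb : 0 ≤ b) (hc : 0 < c) {n : ℕ} (hdecrease : ∀ k, c * d k ^ 2 ≤ a k - a (k + 1))
    (herror : ∀ᶠ k in atTop, a k ≤ b * (∑ j ∈ range n, d (k + j)) ^ 2) :
    ∃ θ : ℝ, 0 < θ ∧ θ < 1 ∧ ∀ᶠ k in atTop, a (k + n) ≤ θ * a k := by
  set D : ℝ := b * n / c with hD
  have hD₀ : 0 ≤ D := by positivity
  refine ⟨(D + 1) / (D + 2), by positivity, by rw [div_lt_one] <;> linarith, ?_⟩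
  filter_upwards [herror] with k hk
  have hgap : 0 ≤ a k - a (k + n) := sub_nonneg.2 (ha (Nat.le_add_right k n))
  have hle : a k ≤ D * (a k - a (k + n)) := by
    calc a k ≤ b * (∑ j ∈ range n, d (k + j)) ^ 2 := hk
      _ ≤ b * (n * ∑ j ∈ range n, d (k + j) ^ 2) := by
        gcongr
        simpa using sq_sum_le_card_mul_sum_sq (s := range n) (f := fun j => d (k + j))
      _ = D * ∑ j ∈ range n, c * d (k + j) ^ 2 := by rw [← mul_sum, hD]; field_simp
      _ ≤ D * (a k - a (k + n)) := by gcongr; exact sum_range_mul_sq_le_sub hdecrease k n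
  rw [div_mul_eq_mul_div, le_div_iff₀ (by positivity)]
  linarith

theorem exists_dist_le_mul_pow_of_le_mul_sq_sum {X : Type*} [PseudoMetricSpace X] {x : ℕ → X}
    {y : X} (hx : Tendsto x atTop (𝓝 y)) {a : ℕ → ℝ} (ha : ∀ k, 0 ≤ a k) {b c : ℝ} (hb : 0 ≤ b)
    (hc : 0 < c) {n : ℕ} (hn : 0 < n)
    (hdecrease : ∀ k, c * dist (x k) (x (k + 1)) ^ 2 ≤ a k - a (k + 1))
    (herror : ∀ᶠ k in atTop,
      a k ≤ b * (∑ j ∈ range n, dist (x (k + j)) (x (k + j + 1))) ^ 2) :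
    ∃ C ρ : ℝ, 0 ≤ ρ ∧ ρ < 1 ∧ ∀ k, dist (x k) y ≤ C * ρ ^ k := by
  have hanti : Antitone a := antitone_nat_of_succ_le fun k => by
    have : 0 ≤ c * dist (x k) (x (k + 1)) ^ 2 := by positivity
    linarith [hdecrease k]
  obtain ⟨θ, hθ₀, hθ₁, hθ⟩ := exists_add_le_mul_of_le_mul_sq_sum hanti hb hc hdecrease herror
  obtain ⟨C, ρ, hC, hρ₀, hρ₁, hgeom⟩ := exists_le_mul_pow_of_add_le_mul ha hanti hn hθ₀ hθ₁ hθ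
  have hsqrt : √ρ < 1 := by rwa [Real.sqrt_lt' one_pos, one_pow]
  have hstep : ∀ k, dist (x k) (x (k + 1)) ≤ √(C / c) * √ρ ^ k := fun k => by
    refine le_of_sq_le_sq ?_ (by positivity)
    calc dist (x k) (x (k + 1)) ^ 2 ≤ a k / c := by
          rw [le_div_iff₀' hc]
          linarith [hdecrease k, ha (k + 1)]
      _ ≤ C * ρ ^ k / c := by gcongr; exact hgeom k
      _ = (√(C / c) * √ρ ^ k) ^ 2 := by
          rw [mul_pow, pow_right_comm, Real.sq_sqrt (by positivity), Real.sq_sqrt hρ₀.le]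
          ring
  refine ⟨√(C / c) / (1 - √ρ), √ρ, by positivity, hsqrt, fun k => ?_⟩
  rw [div_mul_eq_mul_div]
  exact dist_le_of_le_geometric_of_tendsto _ _ hsqrt hstep hx k

end Sequences

section ScalingProfile

/-- Within `S`, near `s`, the function `f` is constant or leaves the value `f s` at least linearly.
For a monotone function this one-sided dichotomy excludes flat tangencies. -/
def IsFlatOrSteepWithinAt (f : ℝ → ℝ) (S : Set ℝ) (s : ℝ) : Prop :=
  f =ᶠ[𝓝[S] s] (fun _ => f s) ∨ (fun t => t - s) =O[𝓝[S] s] fun t => f t - f s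

variable {f g : ℝ → ℝ} {S : Set ℝ} {s : ℝ}

theorem isFlatOrSteepWithinAt_const (b : ℝ) : IsFlatOrSteepWithinAt (fun _ => b) S s :=
  Or.inl EventuallyEq.rfl

namespace IsFlatOrSteepWithinAt

theorem of_hasDerivAt {f' : ℝ} (hf : HasDerivAt f f' s) (hf' : f' ≠ 0) :
    IsFlatOrSteepWithinAt f S s :=
  Or.inr ((hf.isTheta_sub hf').isBigO_symm.comp_tendsto
    ((tendsto_id'.2 nhdsWithin_le_nhds).prodMk (tendsto_pure.2 (.of_forall fun _ => rfl))))

theorem congr (hf : IsFlatOrSteepWithinAt f S s) (h : g =ᶠ[𝓝[S] s] f) (hs : g s = f s) :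
    IsFlatOrSteepWithinAt g S s := by
  refine hf.imp (fun hflat => ?_) fun hsteep => ?_
  · simpa only [hs] using h.trans hflat
  · refine hsteep.congr' EventuallyEq.rfl ?_
    filter_upwards [h] with t ht
    rw [ht, hs]

theorem neg (hf : IsFlatOrSteepWithinAt f S s) : IsFlatOrSteepWithinAt (fun t => -f t) S s := by
  refine hf.imp (fun hflat => hflat.fun_comp Neg.neg) fun hsteep => ?_
  refine hsteep.neg_right.congr_right fun t => ?_
  ring

theorem max_const (hf : IsFlatOrSteepWithinAt f S s) (hcont : ContinuousWithinAt f S s)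
    (hside : (∀ t ∈ S, f t ≤ f s) ∨ ∀ t ∈ S, f s ≤ f t) (b : ℝ) :
    IsFlatOrSteepWithinAt (fun t => max (f t) b) S s := by
  rcases lt_trichotomy (f s) b with h | rfl | h
  · left
    filter_upwards [hcont.eventually_lt_const h] with t ht
    rw [max_eq_right ht.le, max_eq_right h.le]
  · rcases hside with hle | hge
    · left
      filter_upwards [self_mem_nhdsWithin] with t ht
      rw [max_eq_right (hle t ht), max_self]
    · refine hf.congr ?_ (max_self _)
      filter_upwards [self_mem_nhdsWithin] with t ht using max_eq_left (hge t ht)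
  · refine hf.congr ?_ (max_eq_left h.le)
    filter_upwards [hcont.eventually_const_lt h] with t ht using max_eq_left ht.le

theorem min_const (hf : IsFlatOrSteepWithinAt f S s) (hcont : ContinuousWithinAt f S s)
    (hside : (∀ t ∈ S, f t ≤ f s) ∨ ∀ t ∈ S, f s ≤ f t) (b : ℝ) :
    IsFlatOrSteepWithinAt (fun t => min (f t) b) S s := by
  have h := (hf.neg.max_const hcont.neg (by simpa only [neg_le_neg_iff] using hside.symm) (-b)).neg
  simpa only [max_neg_neg, neg_neg] using h

end IsFlatOrSteepWithinAt

/-- The properties of `t ↦ T(a eᵗ)` on which the convergence proof rests: a nonnegative monotone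
function, growing at most like `eᵗ`, that is flat or steep on each side of each point. -/
structure IsScalingProfile (f : ℝ → ℝ) : Prop where
  nonneg : ∀ t, 0 ≤ f t
  mono : Monotone f
  add_le : ∀ t ⦃h : ℝ⦄, 0 ≤ h → f (t + h) ≤ Real.exp h * f t
  left : ∀ s, IsFlatOrSteepWithinAt f (Set.Iic s) s
  right : ∀ s, IsFlatOrSteepWithinAt f (Set.Ici s) s

theorem isScalingProfile_const {b : ℝ} (hb : 0 ≤ b) : IsScalingProfile fun _ => b where
  nonneg _ := hb
  mono := monotone_const
  add_le _ _ hh := le_mul_of_one_le_left hb (Real.one_le_exp hh)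
  left _ := isFlatOrSteepWithinAt_const b
  right _ := isFlatOrSteepWithinAt_const b

theorem isScalingProfile_mul_exp {a : ℝ} (ha : 0 < a) :
    IsScalingProfile fun t => a * Real.exp t where
  nonneg _ := by positivity
  mono := Real.exp_monotone.const_mul ha.le
  add_le t h _ := by rw [Real.exp_add]; exact le_of_eq (by ring)
  left s := .of_hasDerivAt ((Real.hasDerivAt_exp s).const_mul a) (by positivity)
  right s := .of_hasDerivAt ((Real.hasDerivAt_exp s).const_mul a) (by positivity)

namespace IsScalingProfile

theorem le_exp_mul (hf : IsScalingProfile f) {s t h : ℝ} (hh : 0 ≤ h) (hst : s ≤ t + h) :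
    f s ≤ Real.exp h * f t :=
  (hf.mono hst).trans (hf.add_le t hh)

theorem continuous (hf : IsScalingProfile f) : Continuous f := by
  refine continuous_iff_continuousAt.2 fun s => ?_
  have hlow : Tendsto (fun t => Real.exp (-|t - s|) * f s) (𝓝 s) (𝓝 (f s)) :=
    (Continuous.tendsto' (by fun_prop) _ _ (by simp))
  have hupp : Tendsto (fun t => Real.exp |t - s| * f s) (𝓝 s) (𝓝 (f s)) :=
    (Continuous.tendsto' (by fun_prop) _ _ (by simp))
  refine tendsto_of_tendsto_of_tendsto_of_le_of_le hlow hupp (fun t => ?_) fun t => ?_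
  · rw [Real.exp_neg, inv_mul_le_iff₀ (Real.exp_pos _)]
    exact hf.le_exp_mul (abs_nonneg _) (by linarith [neg_abs_le (t - s)])
  · exact hf.le_exp_mul (abs_nonneg _) (by linarith [le_abs_self (t - s)])

theorem max_const (hf : IsScalingProfile f) {b : ℝ} (hb : 0 ≤ b) :
    IsScalingProfile fun t => max (f t) b where
  nonneg _ := le_max_of_le_right hb
  mono := hf.mono.max monotone_const
  add_le t h hh := by
    rw [mul_max_of_nonneg _ _ (Real.exp_pos h).le]
    exact max_le_max (hf.add_le t hh) (le_mul_of_one_le_left hb (Real.one_le_exp hh))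
  left s := (hf.left s).max_const hf.continuous.continuousWithinAt
    (Or.inl fun _ ht => hf.mono ht) b
  right s := (hf.right s).max_const hf.continuous.continuousWithinAt
    (Or.inr fun _ ht => hf.mono ht) b

theorem min_const (hf : IsScalingProfile f) {b : ℝ} (hb : 0 ≤ b) :
    IsScalingProfile fun t => min (f t) b where
  nonneg t := le_min (hf.nonneg t) hb
  mono := hf.mono.min monotone_const
  add_le t h hh := by
    rw [mul_min_of_nonneg _ _ (Real.exp_pos h).le]
    exact min_le_min (hf.add_le t hh) (le_mul_of_one_le_left hb (Real.one_le_exp hh))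
  left s := (hf.left s).min_const hf.continuous.continuousWithinAt
    (Or.inl fun _ ht => hf.mono ht) b
  right s := (hf.right s).min_const hf.continuous.continuousWithinAt
    (Or.inr fun _ ht => hf.mono ht) b

end IsScalingProfile

end ScalingProfile

section Mid

theorem coe_mid (x b : ℝ) (u : EReal) : (mid x u b : EReal) = max (min (x : EReal) u) b := by
  refine EReal.coe_toReal (ne_of_lt ?_) (ne_of_gt ?_)
  · exact max_lt ((min_le_left _ _).trans_lt (EReal.coe_lt_top x)) (EReal.coe_lt_top b)
  · exact (EReal.bot_lt_coe b).trans_le (le_max_right _ _)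

theorem mid_top (x b : ℝ) : mid x ⊤ b = max x b := by
  rw [mid, min_eq_left le_top, ← EReal.coe_strictMono.monotone.map_max, EReal.toReal_coe]

theorem mid_coe (x v b : ℝ) : mid x v b = max (min x v) b := by
  rw [mid, ← EReal.coe_strictMono.monotone.map_min, ← EReal.coe_strictMono.monotone.map_max,
    EReal.toReal_coe]

theorem mid_of_min_le {x b : ℝ} {u : EReal} (h : min (x : EReal) u ≤ b) : mid x u b = b := by
  rw [mid, max_eq_right h, EReal.toReal_coe]

theorem mid_pos {x b : ℝ} {u : EReal} (h : 0 < b ∨ 0 < x ∧ 0 < u) : 0 < mid x u b := by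
  rw [← EReal.coe_pos, coe_mid, lt_max_iff, lt_min_iff, EReal.coe_pos, EReal.coe_pos]
  exact h.symm

theorem mid_mul_coe (x b : ℝ) (u : EReal) {c : ℝ} (hc : 0 < c) :
    mid (x * c) (u * (c : EReal)) (b * c) = mid x u b * c := by
  have hmono : Monotone fun y : EReal => y * (c : EReal) := fun _ _ h =>
    mul_le_mul_of_nonneg_right h (EReal.coe_nonneg.2 hc.le)
  rw [← EReal.coe_eq_coe_iff, coe_mid, EReal.coe_mul, EReal.coe_mul, EReal.coe_mul, coe_mid,
    hmono.map_max, hmono.map_min]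

theorem isScalingProfile_mid_mul_exp (a : ℝ) (u : EReal) {b : ℝ} (hb : 0 ≤ b) :
    IsScalingProfile fun t => mid (a * Real.exp t) u b := by
  rcases le_or_gt u b with hu | hu
  · simpa only [mid_of_min_le (min_le_of_right_le hu)] using isScalingProfile_const hb
  rcases le_or_gt a 0 with ha | ha
  · have h (t : ℝ) : ((a * Real.exp t : ℝ) : EReal) ≤ b :=
      EReal.coe_le_coe_iff.2 ((mul_nonpos_of_nonpos_of_nonneg ha (Real.exp_pos t).le).trans hb)
    simpa only [mid_of_min_le (min_le_of_left_le (h _))] using isScalingProfile_const hb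
  have hexp := isScalingProfile_mul_exp ha
  induction u using EReal.rec with
  | bot => exact absurd hu not_lt_bot
  | top => simpa only [mid_top] using hexp.max_const hb
  | coe v =>
    have hv : 0 ≤ v := hb.trans (EReal.coe_lt_coe_iff.1 hu).le
    simpa only [mid_coe] using (hexp.min_const hv).max_const hb

end Mid

section ScalingFamily

variable {ι : Type*} {ψ : ι → ι → ℝ → ℝ}

/-- The families `ψ i j = (t ↦ T(A eᵗ)_{ij})`, abstractly: the entries of `T(D⁻¹ A D)` for
`D = diag (e^{-p})` are the numbers `ψ i j (p i - p j)`. -/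
structure IsScalingFamily (ψ : ι → ι → ℝ → ℝ) : Prop where
  profile : ∀ i j, IsScalingProfile (ψ i j)
  row_pos : ∀ i, ∃ j, ∀ t, 0 < ψ i j t
  col_pos : ∀ j, ∃ i, ∀ t, 0 < ψ i j t

theorem IsScalingFamily.monotone (hψ : IsScalingFamily ψ) (i j : ι) : Monotone (ψ i j) :=
  (hψ.profile i j).mono

theorem IsScalingFamily.flip (hψ : IsScalingFamily ψ) : IsScalingFamily (flip ψ) where
  profile i j := hψ.profile j i
  row_pos := hψ.col_pos
  col_pos := hψ.row_pos

variable [Fintype ι]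

/-- The `l`-th row sum of the scaled matrix at `p`. -/
def rowSum (ψ : ι → ι → ℝ → ℝ) (p : ι → ℝ) (l : ι) : ℝ := ∑ j, ψ l j (p l - p j)

/-- The `l`-th column sum of the scaled matrix at `p`. -/
def colSum (ψ : ι → ι → ℝ → ℝ) (p : ι → ℝ) (l : ι) : ℝ := ∑ i, ψ i l (p i - p l)

/-- The vector of differences of row and column sums, which is the gradient of `potential ψ`; it
vanishes exactly where the scaled matrix is balanced. -/
def imbalance (ψ : ι → ι → ℝ → ℝ) (p : ι → ℝ) : ι → ℝ := fun l => rowSum ψ p l - colSum ψ p l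

/-- The signed change of the coordinate `l` in the descent step from `p`. -/
noncomputable def stepLength (ψ : ι → ι → ℝ → ℝ) (p : ι → ℝ) (l : ι) : ℝ :=
  (Real.log (colSum ψ p l) - Real.log (rowSum ψ p l)) / 2

/-- The convex function whose gradient is `imbalance ψ` (where the `ψ i j` are continuous). -/
noncomputable def potential (ψ : ι → ι → ℝ → ℝ) (p : ι → ℝ) : ℝ :=
  ∑ i, ∑ j, ∫ x in (0 : ℝ)..(p i - p j), ψ i j x

theorem rowSum_flip_neg (p : ι → ℝ) (l : ι) : rowSum (flip ψ) (-p) l = colSum ψ p l := by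
  simp only [rowSum, colSum, flip, Pi.neg_apply, neg_sub_neg]

theorem colSum_flip_neg (p : ι → ℝ) (l : ι) : colSum (flip ψ) (-p) l = rowSum ψ p l := by
  simp only [rowSum, colSum, flip, Pi.neg_apply, neg_sub_neg]

theorem stepLength_flip_neg (p : ι → ℝ) (l : ι) :
    stepLength (flip ψ) (-p) l = -stepLength ψ p l := by
  rw [stepLength, stepLength, rowSum_flip_neg, colSum_flip_neg]
  ring

theorem potential_flip_neg (p : ι → ℝ) : potential (flip ψ) (-p) = potential ψ p := by
  simp only [potential, flip, Pi.neg_apply, neg_sub_neg]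
  exact sum_comm

theorem mul_sub_le_integral_of_monotone {f : ℝ → ℝ} (hf : Monotone f) (a b : ℝ) :
    f a * (b - a) ≤ ∫ x in a..b, f x := by
  have hconst : f a * (b - a) = ∫ _ in a..b, f a := by simp [mul_comm]
  rw [hconst]
  rcases le_total a b with h | h
  · exact intervalIntegral.integral_mono_on h (by simp) hf.intervalIntegrable fun x hx => hf hx.1
  · rw [intervalIntegral.integral_symm b a, intervalIntegral.integral_symm b a, neg_le_neg_iff]
    exact intervalIntegral.integral_mono_on h hf.intervalIntegrable (by simp) fun x hx => hf hx.2

theorem sum_sum_mul_sub (p v : ι → ℝ) :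
    ∑ i, ∑ j, ψ i j (p i - p j) * (v i - v j) = ∑ l, imbalance ψ p l * v l := by
  simp only [imbalance, rowSum, colSum, sub_mul, mul_sub, sum_sub_distrib, sum_mul]
  congr 1
  exact sum_comm

theorem sum_imbalance_mul_sub_le (hψ : ∀ i j, Monotone (ψ i j)) (p q : ι → ℝ) :
    ∑ l, imbalance ψ p l * (q l - p l) ≤ potential ψ q - potential ψ p := by
  rw [← sum_sum_mul_sub p fun l => q l - p l]
  simp only [potential, ← sum_sub_distrib]
  refine sum_le_sum fun i _ => sum_le_sum fun j _ => ?_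
  rw [intervalIntegral.integral_interval_sub_left (hψ i j).intervalIntegrable
    (hψ i j).intervalIntegrable]
  refine le_of_eq_of_le ?_ (mul_sub_le_integral_of_monotone (hψ i j) _ _)
  ring

theorem potential_le_of_imbalance_eq_zero (hψ : ∀ i j, Monotone (ψ i j)) {s : ι → ℝ}
    (hs : imbalance ψ s = 0) (p : ι → ℝ) : potential ψ s ≤ potential ψ p := by
  simpa [hs] using sum_imbalance_mul_sub_le hψ s p

theorem sub_le_sub_add_two_mul_dist (p q : ι → ℝ) (i j : ι) :
    p i - p j ≤ q i - q j + 2 * dist p q := by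
  have hi := abs_le.1 (dist_le_pi_dist p q i)
  have hj := abs_le.1 (dist_le_pi_dist p q j)
  linarith

theorem abs_sub_le_add_mul_abs_log_sub {x y : ℝ} (hx : 0 < x) (hy : 0 < y) :
    |x - y| ≤ (x + y) * |Real.log x - Real.log y| := by
  wlog hxy : x ≤ y generalizing x y
  · rw [abs_sub_comm, add_comm, abs_sub_comm (Real.log x)]
    exact this hy hx (le_of_not_ge hxy)
  have hlog : y - x ≤ y * (Real.log y - Real.log x) := by
    have h := Real.one_sub_inv_le_log_of_pos (div_pos hy hx)
    rw [Real.log_div hy.ne' hx.ne', inv_div] at h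
    calc y - x = y * (1 - x / y) := by field_simp
      _ ≤ y * (Real.log y - Real.log x) := by gcongr
  have hlog₀ : 0 ≤ Real.log y - Real.log x := sub_nonneg.2 (Real.log_le_log hx hxy)
  rw [abs_sub_comm, abs_of_nonneg (sub_nonneg.2 hxy), abs_sub_comm (Real.log x),
    abs_of_nonneg hlog₀]
  nlinarith

namespace IsScalingFamily

theorem rowSum_pos (hψ : IsScalingFamily ψ) (p : ι → ℝ) (l : ι) : 0 < rowSum ψ p l := by
  obtain ⟨j, hj⟩ := hψ.row_pos l
  exact sum_pos' (fun j _ => (hψ.profile l j).nonneg _) ⟨j, mem_univ _, hj _⟩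

theorem colSum_pos (hψ : IsScalingFamily ψ) (p : ι → ℝ) (l : ι) : 0 < colSum ψ p l := by
  simpa only [rowSum_flip_neg] using hψ.flip.rowSum_pos (-p) l

theorem rowSum_le (hψ : IsScalingFamily ψ) {p q : ι → ℝ} {l : ι} {h : ℝ} (hh : 0 ≤ h)
    (hpq : ∀ j, p l - p j ≤ q l - q j + h) : rowSum ψ p l ≤ Real.exp h * rowSum ψ q l := by
  rw [rowSum, rowSum, mul_sum]
  exact sum_le_sum fun j _ => (hψ.profile l j).le_exp_mul hh (hpq j)

theorem colSum_le (hψ : IsScalingFamily ψ) {p q : ι → ℝ} {l : ι} {h : ℝ} (hh : 0 ≤ h)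
    (hpq : ∀ i, p i - p l ≤ q i - q l + h) : colSum ψ p l ≤ Real.exp h * colSum ψ q l := by
  simpa only [rowSum_flip_neg] using
    hψ.flip.rowSum_le (p := -p) (q := -q) hh fun i => by
      simpa only [Pi.neg_apply, neg_sub_neg] using hpq i

theorem log_rowSum_le (hψ : IsScalingFamily ψ) {p q : ι → ℝ} {l : ι} {h : ℝ} (hh : 0 ≤ h)
    (hpq : ∀ j, p l - p j ≤ q l - q j + h) :
    Real.log (rowSum ψ p l) ≤ Real.log (rowSum ψ q l) + h := by
  have hlog := Real.log_le_log (hψ.rowSum_pos p l) (hψ.rowSum_le hh hpq)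
  rwa [Real.log_mul (Real.exp_pos h).ne' (hψ.rowSum_pos q l).ne', Real.log_exp, add_comm] at hlog

theorem log_colSum_le (hψ : IsScalingFamily ψ) {p q : ι → ℝ} {l : ι} {h : ℝ} (hh : 0 ≤ h)
    (hpq : ∀ i, p i - p l ≤ q i - q l + h) :
    Real.log (colSum ψ p l) ≤ Real.log (colSum ψ q l) + h := by
  simpa only [rowSum_flip_neg] using
    hψ.flip.log_rowSum_le (p := -p) (q := -q) hh fun i => by
      simpa only [Pi.neg_apply, neg_sub_neg] using hpq i

theorem colSum_eq_exp_mul_rowSum (hψ : IsScalingFamily ψ) (p : ι → ℝ) (l : ι) :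
    colSum ψ p l = Real.exp (2 * stepLength ψ p l) * rowSum ψ p l := by
  rw [stepLength, mul_div_cancel₀ _ two_ne_zero, Real.exp_sub, Real.exp_log (hψ.colSum_pos p l),
    Real.exp_log (hψ.rowSum_pos p l), div_mul_cancel₀ _ (hψ.rowSum_pos p l).ne']

theorem stepLength_le_add_two_mul_dist (hψ : IsScalingFamily ψ) (p q : ι → ℝ) (l : ι) :
    stepLength ψ p l ≤ stepLength ψ q l + 2 * dist p q := by
  have hdist : 0 ≤ 2 * dist p q := by positivity
  have hcol := hψ.log_colSum_le (l := l) hdist fun i => sub_le_sub_add_two_mul_dist p q i l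
  have hrow := hψ.log_rowSum_le (p := q) (q := p) (l := l) hdist fun j => by
    rw [dist_comm]
    exact sub_le_sub_add_two_mul_dist q p l j
  rw [stepLength, stepLength]
  linarith

theorem abs_stepLength_le_add_two_mul_dist (hψ : IsScalingFamily ψ) (p q : ι → ℝ) (l : ι) :
    |stepLength ψ p l| ≤ |stepLength ψ q l| + 2 * dist p q := by
  have hq := abs_le.1 (le_refl |stepLength ψ q l|)
  have hpq := hψ.stepLength_le_add_two_mul_dist p q l
  have hqp := dist_comm q p ▸ hψ.stepLength_le_add_two_mul_dist q p l
  exact abs_le.2 ⟨by linarith, by linarith⟩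

theorem abs_imbalance_le (hψ : IsScalingFamily ψ) (p : ι → ℝ) (l : ι) :
    |imbalance ψ p l| ≤ (rowSum ψ p l + colSum ψ p l) * (2 * |stepLength ψ p l|) := by
  refine (abs_sub_le_add_mul_abs_log_sub (hψ.rowSum_pos p l) (hψ.colSum_pos p l)).trans_eq ?_
  rw [stepLength, abs_div, abs_two, abs_sub_comm, mul_div_cancel₀ _ two_ne_zero]

theorem continuous_rowSum (hψ : IsScalingFamily ψ) (l : ι) : Continuous (rowSum ψ · l) :=
  continuous_finsetSum _ fun j _ => (hψ.profile l j).continuous.comp (by fun_prop)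

theorem continuous_colSum (hψ : IsScalingFamily ψ) (l : ι) : Continuous (colSum ψ · l) :=
  continuous_finsetSum _ fun i _ => (hψ.profile i l).continuous.comp (by fun_prop)

theorem continuous_imbalance (hψ : IsScalingFamily ψ) : Continuous (imbalance ψ) :=
  continuous_pi fun l => (hψ.continuous_rowSum l).sub (hψ.continuous_colSum l)

theorem exists_pos_le_sums (hψ : IsScalingFamily ψ) {K : Set (ι → ℝ)} (hK : IsCompact K) :
    ∃ m > 0, ∀ p ∈ K, ∀ l, m ≤ rowSum ψ p l ∧ m ≤ colSum ψ p l := by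
  have h : ∀ᶠ m in 𝓝[>] (0 : ℝ), ∀ l, ∀ p ∈ K, m ≤ min (rowSum ψ p l) (colSum ψ p l) :=
    eventually_all.2 fun l => by
      obtain ⟨m, hm, hle⟩ := hK.exists_forall_le'
        ((hψ.continuous_rowSum l).min (hψ.continuous_colSum l)).continuousOn
        fun p _ => lt_min (hψ.rowSum_pos p l) (hψ.colSum_pos p l)
      filter_upwards [Ioc_mem_nhdsGT hm] with x hx p hp using hx.2.trans (hle p hp)
  obtain ⟨m, hle, hm⟩ := (h.and self_mem_nhdsWithin).exists
  exact ⟨m, hm, fun p hp l => le_min_iff.1 (hle l p hp)⟩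

theorem exists_norm_imbalance_le (hψ : IsScalingFamily ψ) {K : Set (ι → ℝ)} (hK : IsCompact K) :
    ∃ M, ∀ p ∈ K, ∀ r ≥ 0, (∀ l, |stepLength ψ p l| ≤ r) → ‖imbalance ψ p‖ ≤ M * r := by
  obtain ⟨M, hM⟩ := hK.exists_bound_of_continuousOn (f := fun p l => rowSum ψ p l + colSum ψ p l)
    (continuous_pi fun l => (hψ.continuous_rowSum l).add (hψ.continuous_colSum l)).continuousOn
  refine ⟨2 * |M|, fun p hp r hr hstep => ?_⟩
  refine (pi_norm_le_iff_of_nonneg (by positivity)).2 fun l => ?_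
  have hsums : rowSum ψ p l + colSum ψ p l ≤ |M| :=
    (le_abs_self _).trans ((norm_le_pi_norm _ l).trans ((hM p hp).trans (le_abs_self M)))
  calc |imbalance ψ p l| ≤ (rowSum ψ p l + colSum ψ p l) * (2 * |stepLength ψ p l|) :=
        hψ.abs_imbalance_le p l
    _ ≤ |M| * (2 * r) := by gcongr; exact hstep l
    _ = 2 * |M| * r := by ring

end IsScalingFamily

end ScalingFamily

section DescentStep

variable {ι : Type*} [Fintype ι] [DecidableEq ι] {ψ : ι → ι → ℝ → ℝ}

/-- The descent step for `potential ψ` in the coordinate `l`. It would make the `l`-th row and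
column sums equal if the profiles were exponentials. -/
noncomputable def descentStep (ψ : ι → ι → ℝ → ℝ) (p : ι → ℝ) (l : ι) : ι → ℝ :=
  Function.update p l (p l + stepLength ψ p l)

theorem descentStep_flip_neg (p : ι → ℝ) (l : ι) :
    descentStep (flip ψ) (-p) l = -descentStep ψ p l := by
  rw [descentStep, descentStep, stepLength_flip_neg, ← Function.update_neg, Pi.neg_apply, neg_add]

theorem dist_descentStep_self (p : ι → ℝ) (l : ι) :
    dist p (descentStep ψ p l) = |stepLength ψ p l| := by
  have h : descentStep ψ p l - p = Pi.single l (stepLength ψ p l) := by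
    ext i
    obtain rfl | hi := eq_or_ne i l <;> simp [descentStep, *]
  rw [dist_comm, dist_eq_norm, h, Pi.norm_single, Real.norm_eq_abs]

theorem descentStep_of_imbalance_eq_zero {s : ι → ℝ} {l : ι} (hs : imbalance ψ s l = 0) :
    descentStep ψ s l = s := by
  rw [descentStep, stepLength, sub_eq_zero.1 hs, sub_self, zero_div, add_zero,
    Function.update_eq_self]

theorem potential_update_sub_le (hψ : ∀ i j, Monotone (ψ i j)) (p : ι → ℝ) (l : ι) (x y : ℝ) :
    potential ψ (Function.update p l y) - potential ψ (Function.update p l x) ≤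
      imbalance ψ (Function.update p l y) l * (y - x) := by
  have h := sum_imbalance_mul_sub_le hψ (Function.update p l y) (Function.update p l x)
  rw [sum_eq_single l (fun i _ hi => by simp [hi]) (by simp), Function.update_self,
    Function.update_self] at h
  linarith

namespace IsScalingFamily

theorem imbalance_update_le (hψ : IsScalingFamily ψ) (p : ι → ℝ) (l : ι) {x : ℝ} (hx : 0 ≤ x) :
    imbalance ψ (Function.update p l (p l + x)) l ≤
      (Real.exp x - Real.exp (2 * stepLength ψ p l - x)) * rowSum ψ p l := by
  set q := Function.update p l (p l + x) with hq
  have hle (i : ι) : p i ≤ q i := by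
    obtain rfl | hi := eq_or_ne i l <;> simp [*]
  have hql : q l = p l + x := Function.update_self ..
  have hrow : rowSum ψ q l ≤ Real.exp x * rowSum ψ p l :=
    hψ.rowSum_le hx fun j => by linarith [hle j]
  have hcol : colSum ψ p l ≤ Real.exp x * colSum ψ q l :=
    hψ.colSum_le hx fun i => by linarith [hle i]
  have hcol' : Real.exp (2 * stepLength ψ p l - x) * rowSum ψ p l ≤ colSum ψ q l := by
    rwa [Real.exp_sub, div_mul_eq_mul_div, ← hψ.colSum_eq_exp_mul_rowSum,
      div_le_iff₀' (Real.exp_pos x)]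
  rw [imbalance, sub_mul]
  exact sub_le_sub hrow hcol'

theorem potential_descentStep_of_nonneg (hψ : IsScalingFamily ψ) {p : ι → ℝ} {l : ι}
    (ht : 0 ≤ stepLength ψ p l) : rowSum ψ p l / 2 * stepLength ψ p l ^ 2 ≤
      potential ψ p - potential ψ (descentStep ψ p l) := by
  -- The potential is convex: bound it by tangents at the middle and at the end of the step.
  set t := stepLength ψ p l with htdef
  set r := rowSum ψ p l
  have hr₀ : 0 < r := hψ.rowSum_pos p l
  have hhalf : imbalance ψ (Function.update p l (p l + t / 2)) l ≤ -t * r := by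
    refine (hψ.imbalance_update_le p l (div_nonneg ht zero_le_two)).trans ?_
    have hexp : Real.exp (2 * t - t / 2) = Real.exp (t / 2) * Real.exp t := by
      rw [← Real.exp_add]
      ring_nf
    have hone : 1 ≤ Real.exp (t / 2) := Real.one_le_exp (by positivity)
    rw [← htdef, hexp]
    gcongr
    nlinarith [Real.add_one_le_exp t]
  have hfull : imbalance ψ (Function.update p l (p l + t)) l ≤ 0 := by
    refine (hψ.imbalance_update_le p l ht).trans_eq ?_
    rw [← htdef, two_mul, add_sub_cancel_right, sub_self, zero_mul]
  have h₁ := potential_update_sub_le hψ.monotone p l (p l) (p l + t / 2)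
  have h₂ := potential_update_sub_le hψ.monotone p l (p l + t / 2) (p l + t)
  rw [Function.update_eq_self] at h₁
  rw [descentStep, ← htdef]
  nlinarith

theorem potential_descentStep (hψ : IsScalingFamily ψ) (p : ι → ℝ) (l : ι) {m : ℝ}
    (hrow : m ≤ rowSum ψ p l) (hcol : m ≤ colSum ψ p l) :
    m / 2 * stepLength ψ p l ^ 2 ≤ potential ψ p - potential ψ (descentStep ψ p l) := by
  rcases le_total 0 (stepLength ψ p l) with ht | ht
  · refine le_trans ?_ (hψ.potential_descentStep_of_nonneg ht)
    gcongr
  · have h := hψ.flip.potential_descentStep_of_nonneg (p := -p) (l := l)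
      (by rwa [stepLength_flip_neg, neg_nonneg])
    rw [rowSum_flip_neg, stepLength_flip_neg, neg_sq, descentStep_flip_neg, potential_flip_neg,
      potential_flip_neg] at h
    refine le_trans ?_ h
    gcongr

theorem descentStep_le_add (hψ : IsScalingFamily ψ) {p q : ι → ℝ} {h : ℝ}
    (hpq : ∀ i, p i ≤ q i + h) (l i : ι) : descentStep ψ p l i ≤ descentStep ψ q l i + h := by
  obtain rfl | hi := eq_or_ne i l
  · have hgap : 0 ≤ q i + h - p i := sub_nonneg.2 (hpq i)
    have hcol := hψ.log_colSum_le (p := p) (q := q) (l := i) hgap fun j => by linarith [hpq j]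
    have hrow := hψ.log_rowSum_le (p := q) (q := p) (l := i) hgap fun j => by linarith [hpq j]
    simp only [descentStep, Function.update_self, stepLength]
    linarith
  · simpa [descentStep, hi] using hpq i

theorem dist_descentStep_le (hψ : IsScalingFamily ψ) (p q : ι → ℝ) (l : ι) :
    dist (descentStep ψ p l) (descentStep ψ q l) ≤ dist p q := by
  have hle (p q : ι → ℝ) (i : ι) : p i ≤ q i + dist p q := by
    linarith [abs_le.1 (dist_le_pi_dist p q i)]
  refine (dist_pi_le_iff dist_nonneg).2 fun i => abs_sub_le_iff.2 ⟨?_, ?_⟩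
  · linarith [hψ.descentStep_le_add (hle p q) l i]
  · linarith [dist_comm p q ▸ hψ.descentStep_le_add (hle q p) l i]

end IsScalingFamily

end DescentStep

section OrderConstraints

open Relation

theorem exists_le_add_mul_of_reflTransGen {ι : Type*} {E : ι → ι → Prop} {i j : ι}
    (h : ReflTransGen E i j) : ∃ N : ℝ, ∀ (u : ι → ℝ) (ε : ℝ),
      (∀ a b, E a b → u a ≤ u b + ε) → u i ≤ u j + N * ε := by
  induction h with
  | refl => exact ⟨0, fun u ε _ => by simp⟩
  | tail _ hbc ih =>
    obtain ⟨N, hN⟩ := ih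
    exact ⟨N + 1, fun u ε hu => by linarith [hN u ε hu, hu _ _ hbc]⟩

theorem exists_forall_reflTransGen_le_add_mul {ι : Type*} [Finite ι] (E : ι → ι → Prop) :
    ∃ N ≥ (0 : ℝ), ∀ (u : ι → ℝ) (ε : ℝ), 0 ≤ ε → (∀ a b, E a b → u a ≤ u b + ε) →
      ∀ i j, ReflTransGen E i j → u i ≤ u j + N * ε := by
  have h : ∀ᶠ N : ℝ in atTop, ∀ i j, ReflTransGen E i j → ∀ (u : ι → ℝ) (ε : ℝ), 0 ≤ ε →
      (∀ a b, E a b → u a ≤ u b + ε) → u i ≤ u j + N * ε := by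
    refine eventually_all.2 fun i => eventually_all.2 fun j => ?_
    by_cases hij : ReflTransGen E i j
    · obtain ⟨N₀, hN₀⟩ := exists_le_add_mul_of_reflTransGen hij
      filter_upwards [eventually_ge_atTop N₀] with N hN _ u ε hε hu
      exact (hN₀ u ε hu).trans (by gcongr)
    · exact .of_forall fun _ h => absurd h hij
  obtain ⟨N, hN, hN₀⟩ := (h.and (eventually_ge_atTop 0)).exists
  exact ⟨N, hN₀, fun u ε hε hu i j hij => hN i j hij u ε hε hu⟩

/-- Hoffman's error bound for the system of inequalities `u a ≤ u b`, `E a b`. -/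
theorem exists_norm_sub_le_mul_of_le_add {ι : Type*} [Fintype ι] (E : ι → ι → Prop) :
    ∃ N ≥ (0 : ℝ), ∀ (u : ι → ℝ) (ε : ℝ), 0 ≤ ε → (∀ a b, E a b → u a ≤ u b + ε) →
      ∃ v : ι → ℝ, (∀ a b, E a b → v a ≤ v b) ∧ ‖v‖ ≤ ‖u‖ ∧ ‖u - v‖ ≤ N * ε := by
  obtain ⟨N, hN₀, hN⟩ := exists_forall_reflTransGen_le_add_mul E
  refine ⟨N, hN₀, fun u ε hε hu => ?_⟩
  have hnonempty (i : ι) : Nonempty {j // ReflTransGen E i j} := ⟨i, .refl⟩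
  have hle {i j : ι} (hij : ReflTransGen E i j) :
      (⨅ j : {j // ReflTransGen E i j}, u j) ≤ u j :=
    ciInf_le (f := fun j : {j // ReflTransGen E i j} => u j) (Set.finite_range _).bddBelow ⟨j, hij⟩
  have hattained (i : ι) :
      ∃ j, ReflTransGen E i j ∧ u j = ⨅ j : {j // ReflTransGen E i j}, u j := by
    obtain ⟨⟨j, hij⟩, hj⟩ :=
      exists_eq_ciInf_of_finite (f := fun j : {j // ReflTransGen E i j} => u j)
    exact ⟨j, hij, hj⟩
  refine ⟨fun i => ⨅ j : {j // ReflTransGen E i j}, u j, fun a b hab => ?_, ?_, ?_⟩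
  · exact le_ciInf fun j => hle (.head hab j.2)
  · refine (pi_norm_le_iff_of_nonneg (norm_nonneg u)).2 fun i => ?_
    obtain ⟨j, -, hj⟩ := hattained i
    exact hj ▸ norm_le_pi_norm u j
  · refine (pi_norm_le_iff_of_nonneg (by positivity)).2 fun i => ?_
    obtain ⟨j, hij, hj⟩ := hattained i
    rw [Pi.sub_apply, Real.norm_of_nonneg (sub_nonneg.2 (hle .refl)), ← hj]
    linarith [hN u ε hε hu i j hij]

end OrderConstraints

section ErrorBound

theorem sum_sum_eq_sum_sum_compl_of_antisymm {ι : Type*} [Fintype ι] [DecidableEq ι] (R : Finset ι)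
    {Z : ι → ι → ℝ} (hZ : ∀ i j, Z j i = -Z i j) :
    ∑ i ∈ R, ∑ j, Z i j = ∑ i ∈ R, ∑ j ∈ Rᶜ, Z i j := by
  have hinner : ∑ i ∈ R, ∑ j ∈ R, Z i j = 0 := by
    have h : ∑ i ∈ R, ∑ j ∈ R, Z i j = -∑ i ∈ R, ∑ j ∈ R, Z i j := by
      simp only [← sum_neg_distrib]
      rw [sum_comm]
      exact sum_congr rfl fun j _ => sum_congr rfl fun i _ => hZ j i
    linarith
  simp only [← sum_add_sum_compl R, sum_add_distrib, hinner, zero_add]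

theorem IsFlatOrSteepWithinAt.exists_abs_sub_le {f : ℝ → ℝ} {S : Set ℝ} {s : ℝ}
    (hf : IsFlatOrSteepWithinAt f S s) (hflat : ¬ f =ᶠ[𝓝[S] s] fun _ => f s) :
    ∃ C ≥ 0, ∀ᶠ t in 𝓝 s, t ∈ S → |t - s| ≤ C * |f t - f s| := by
  obtain ⟨C, hC, h⟩ := (hf.resolve_left hflat).exists_nonneg
  exact ⟨C, hC, eventually_nhdsWithin_iff.1 h.bound⟩

variable {ι : Type*} {ψ : ι → ι → ℝ → ℝ} {s : ι → ℝ} {i j : ι}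

/-- Raising the `i`-th coordinate of `s` relative to the `j`-th one, however little, changes one of
the two entries of the scaled matrix that depend on their difference. -/
def IsRigid (ψ : ι → ι → ℝ → ℝ) (s : ι → ℝ) (i j : ι) : Prop :=
  (¬ ψ i j =ᶠ[𝓝[≥] (s i - s j)] fun _ => ψ i j (s i - s j)) ∨
    ¬ ψ j i =ᶠ[𝓝[≤] (s j - s i)] fun _ => ψ j i (s j - s i)

theorem tendsto_apply_sub_apply (s : ι → ℝ) (i j : ι) :
    Tendsto (fun p : ι → ℝ => p i - p j) (𝓝 s) (𝓝 (s i - s j)) :=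
  Continuous.tendsto (by fun_prop) s

theorem eventually_entries_eq_of_not_isRigid (h : ¬ IsRigid ψ s i j) :
    ∀ᶠ p in 𝓝 s, s i - s j ≤ p i - p j →
      ψ i j (p i - p j) = ψ i j (s i - s j) ∧ ψ j i (p j - p i) = ψ j i (s j - s i) := by
  obtain ⟨hright, hleft⟩ := not_or.1 h
  filter_upwards [(tendsto_apply_sub_apply s i j).eventually
      (eventually_nhdsWithin_iff.1 (not_not.1 hright)),
    (tendsto_apply_sub_apply s j i).eventually
      (eventually_nhdsWithin_iff.1 (not_not.1 hleft))] with p hij hji hp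
  exact ⟨hij hp, hji (by rw [Set.mem_Iic]; linarith)⟩

variable [Fintype ι]

theorem entry_sub_add_entry_sub_le (hψ : ∀ i j, Monotone (ψ i j)) {p : ι → ℝ}
    (hs : imbalance ψ s = 0) (hij : p j - s j < p i - s i) :
    (ψ i j (p i - p j) - ψ i j (s i - s j)) + (ψ j i (s j - s i) - ψ j i (p j - p i)) ≤
      Fintype.card ι * ‖imbalance ψ p‖ := by
  -- Sum the imbalance over the superlevel set `R` of `p - s` through `i`: entries with both indices
  -- in `R` cancel, and those across the boundary of `R` all contribute with the same sign.
  classical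
  let Z (k m : ι) : ℝ :=
    (ψ k m (p k - p m) - ψ k m (s k - s m)) + (ψ m k (s m - s k) - ψ m k (p m - p k))
  let R : Finset ι := {k | p i - s i ≤ p k - s k}
  have hrow (k : ι) : ∑ m, Z k m = imbalance ψ p k := by
    have hk : ∑ j, ψ k j (s k - s j) - ∑ i, ψ i k (s i - s k) = 0 := congrFun hs k
    simp only [Z, imbalance, rowSum, colSum, sum_add_distrib, sum_sub_distrib]
    linarith
  have hcut : ∀ x ∈ R ×ˢ Rᶜ, 0 ≤ Z x.1 x.2 := by
    rintro ⟨k, m⟩ hkm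
    simp only [R, mem_product, mem_compl, mem_filter_univ, not_le] at hkm
    exact add_nonneg (sub_nonneg.2 (hψ k m (by linarith))) (sub_nonneg.2 (hψ m k (by linarith)))
  have hmem : (i, j) ∈ R ×ˢ Rᶜ := by
    simpa only [R, mem_product, mem_compl, mem_filter_univ, le_refl, true_and, not_le]
  calc Z i j ≤ ∑ x ∈ R ×ˢ Rᶜ, Z x.1 x.2 :=
        single_le_sum (f := fun x : ι × ι => Z x.1 x.2) hcut hmem
    _ = ∑ k ∈ R, imbalance ψ p k := by
        rw [sum_product, ← sum_sum_eq_sum_sum_compl_of_antisymm R fun k m => by simp only [Z]; ring]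
        simp only [hrow]
    _ ≤ ∑ _k ∈ R, ‖imbalance ψ p‖ :=
        sum_le_sum fun k _ => (le_abs_self _).trans (norm_le_pi_norm (imbalance ψ p) k)
    _ ≤ Fintype.card ι * ‖imbalance ψ p‖ := by
        rw [sum_const, nsmul_eq_mul]
        gcongr
        exact card_le_univ R

theorem eventually_imbalance_eq (ψ : ι → ι → ℝ → ℝ) (s : ι → ℝ) :
    ∀ᶠ p in 𝓝 s, (∀ i j, IsRigid ψ s i j → p i - s i ≤ p j - s j) →
      imbalance ψ p = imbalance ψ s := by
  have h : ∀ᶠ p in 𝓝 s, ∀ i j, ¬ IsRigid ψ s i j → s i - s j ≤ p i - p j →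
      ψ i j (p i - p j) = ψ i j (s i - s j) ∧ ψ j i (p j - p i) = ψ j i (s j - s i) := by
    simp only [eventually_all]
    exact fun i j hij => eventually_entries_eq_of_not_isRigid hij
  filter_upwards [h] with p hp hrigid
  have hup {i j : ι} (hij : s i - s j ≤ p i - p j) :
      ψ i j (p i - p j) = ψ i j (s i - s j) ∧ ψ j i (p j - p i) = ψ j i (s j - s i) := by
    by_cases hr : IsRigid ψ s i j
    · have heq : p i - p j = s i - s j := by linarith [hrigid i j hr]
      rw [heq, ← neg_sub (p i), heq, neg_sub]
      exact ⟨rfl, rfl⟩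
    · exact hp i j hr hij
  have hentry (i j : ι) : ψ i j (p i - p j) = ψ i j (s i - s j) := by
    rcases le_total (s i - s j) (p i - p j) with hij | hij
    · exact (hup hij).1
    · exact (hup (by linarith)).2
  ext l
  simp only [imbalance, rowSum, colSum, hentry]

namespace IsScalingFamily

theorem exists_sub_le_mul_norm_imbalance (hψ : IsScalingFamily ψ) (hs : imbalance ψ s = 0)
    (hij : IsRigid ψ s i j) : ∃ C, ∀ᶠ p in 𝓝 s,
      p i - s i ≤ p j - s j + C * ‖imbalance ψ p‖ := by
  have hcut {p : ι → ℝ} (hp : p j - s j < p i - s i) :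
      |ψ i j (p i - p j) - ψ i j (s i - s j)| ≤ Fintype.card ι * ‖imbalance ψ p‖ ∧
        |ψ j i (p j - p i) - ψ j i (s j - s i)| ≤ Fintype.card ι * ‖imbalance ψ p‖ := by
    have hsum := entry_sub_add_entry_sub_le hψ.monotone hs hp
    have hup := sub_nonneg.2 (hψ.monotone i j (by linarith : s i - s j ≤ p i - p j))
    have hdown := sub_nonneg.2 (hψ.monotone j i (by linarith : p j - p i ≤ s j - s i))
    rw [abs_of_nonneg hup, abs_sub_comm, abs_of_nonneg hdown]
    exact ⟨by linarith, by linarith⟩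
  rcases hij with hflat | hflat
  · obtain ⟨C, hC, h⟩ := ((hψ.profile i j).right _).exists_abs_sub_le hflat
    refine ⟨C * Fintype.card ι, ?_⟩
    filter_upwards [(tendsto_apply_sub_apply s i j).eventually h] with p hp
    rcases le_or_gt (p i - s i) (p j - s j) with hle | hlt
    · exact le_add_of_le_of_nonneg hle (by positivity)
    · have habs := hp (by rw [Set.mem_Ici]; linarith)
      have := mul_le_mul_of_nonneg_left (hcut hlt).1 hC
      linarith [le_abs_self (p i - p j - (s i - s j))]
  · obtain ⟨C, hC, h⟩ := ((hψ.profile j i).left _).exists_abs_sub_le hflat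
    refine ⟨C * Fintype.card ι, ?_⟩
    filter_upwards [(tendsto_apply_sub_apply s j i).eventually h] with p hp
    rcases le_or_gt (p i - s i) (p j - s j) with hle | hlt
    · exact le_add_of_le_of_nonneg hle (by positivity)
    · have habs := hp (by rw [Set.mem_Iic]; linarith)
      have := mul_le_mul_of_nonneg_left (hcut hlt).2 hC
      linarith [neg_abs_le (p j - p i - (s j - s i))]

theorem exists_forall_isRigid_sub_le (hψ : IsScalingFamily ψ) (hs : imbalance ψ s = 0) :
    ∃ C ≥ 0, ∀ᶠ p in 𝓝 s, ∀ i j, IsRigid ψ s i j →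
      p i - s i ≤ p j - s j + C * ‖imbalance ψ p‖ := by
  have h : ∀ᶠ C in atTop, ∀ i j, IsRigid ψ s i j →
      ∀ᶠ p in 𝓝 s, p i - s i ≤ p j - s j + C * ‖imbalance ψ p‖ := by
    simp only [eventually_all]
    intro i j hij
    obtain ⟨C₀, hC₀⟩ := hψ.exists_sub_le_mul_norm_imbalance hs hij
    filter_upwards [eventually_ge_atTop C₀] with C hC
    filter_upwards [hC₀] with p hp using hp.trans (by gcongr)
  obtain ⟨C, hC, hC₀⟩ := (h.and (eventually_ge_atTop 0)).exists
  refine ⟨C, hC₀, ?_⟩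
  simpa only [eventually_all] using hC

theorem exists_dist_le_mul_norm_imbalance (hψ : IsScalingFamily ψ) (hs : imbalance ψ s = 0) :
    ∃ C ≥ 0, ∀ᶠ p in 𝓝 s, ∃ q, imbalance ψ q = 0 ∧ ‖p - q‖ ≤ C * ‖imbalance ψ p‖ := by
  obtain ⟨C, hC₀, hC⟩ := hψ.exists_forall_isRigid_sub_le hs
  obtain ⟨N, hN₀, hN⟩ := exists_norm_sub_le_mul_of_le_add (IsRigid ψ s)
  obtain ⟨δ, hδ, hbal⟩ := Metric.eventually_nhds_iff.1 (eventually_imbalance_eq ψ s)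
  refine ⟨N * C, by positivity, ?_⟩
  filter_upwards [hC, Metric.ball_mem_nhds s hδ] with p hp hpδ
  obtain ⟨v, hv, hvp, hpv⟩ := hN (p - s) (C * ‖imbalance ψ p‖) (by positivity) hp
  refine ⟨s + v, ?_, by rwa [← sub_sub, mul_assoc]⟩
  rw [← hs]
  refine hbal ?_ fun i j hij => by simpa using hv i j hij
  rw [dist_eq_norm, add_sub_cancel_left]
  exact hvp.trans_lt (mem_ball_iff_norm.1 hpδ)

theorem exists_potential_sub_le (hψ : IsScalingFamily ψ) (hs : imbalance ψ s = 0) :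
    ∃ C ≥ 0, ∀ᶠ p in 𝓝 s, potential ψ p - potential ψ s ≤ C * ‖imbalance ψ p‖ ^ 2 := by
  obtain ⟨C, hC₀, hC⟩ := hψ.exists_dist_le_mul_norm_imbalance hs
  refine ⟨Fintype.card ι * C, by positivity, ?_⟩
  filter_upwards [hC] with p ⟨q, hq, hpq⟩
  calc potential ψ p - potential ψ s ≤ potential ψ p - potential ψ q :=
        sub_le_sub_left (potential_le_of_imbalance_eq_zero hψ.monotone hq s) _
    _ ≤ ∑ l, imbalance ψ p l * (p l - q l) := by
        have h := sum_imbalance_mul_sub_le hψ.monotone p q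
        simp only [← neg_sub (p _), mul_neg, sum_neg_distrib] at h
        linarith
    _ ≤ ∑ _l : ι, ‖imbalance ψ p‖ * (C * ‖imbalance ψ p‖) := by
        refine sum_le_sum fun l _ => (le_abs_self _).trans ?_
        rw [abs_mul]
        exact mul_le_mul (norm_le_pi_norm (imbalance ψ p) l) ((norm_le_pi_norm (p - q) l).trans hpq)
          (abs_nonneg _) (norm_nonneg _)
    _ = Fintype.card ι * C * ‖imbalance ψ p‖ ^ 2 := by
        rw [sum_const, card_univ, nsmul_eq_mul]
        ring

end IsScalingFamily

end ErrorBound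

section Convergence

/-- The selection rule `l` visits every index in each window of `N` consecutive steps, as cyclic
selection among `N` indices does. -/
def IsEssentiallyCyclic {ι : Type*} (l : ℕ → ι) (N : ℕ) : Prop :=
  ∀ k i, ∃ m < N, l (k + m) = i

theorem IsEssentiallyCyclic.pos {ι : Type*} {l : ℕ → ι} {N : ℕ} (hl : IsEssentiallyCyclic l N) :
    0 < N := by
  obtain ⟨m, hm, -⟩ := hl 0 (l 0)
  exact m.zero_le.trans_lt hm

theorem exists_lt_add_mod_eq {n a : ℕ} (ha : a < n) (k : ℕ) : ∃ m < n, (k + m) % n = a := by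
  have hn : 0 < n := a.zero_le.trans_lt ha
  refine ⟨(n - k % n + a) % n, Nat.mod_lt _ hn, ?_⟩
  have hk : k + (n - k % n + a) = a + n * (k / n + 1) := by
    have hlt := Nat.mod_lt k hn
    have hdiv := Nat.mod_add_div k n
    rw [mul_add]
    omega
  rw [Nat.add_mod_mod, hk, Nat.add_mul_mod_self_left, Nat.mod_eq_of_lt ha]

theorem isEssentiallyCyclic_mod {n : ℕ} (hn : 0 < n) (σ : Equiv.Perm (Fin n)) :
    IsEssentiallyCyclic (fun k => σ ⟨k % n, Nat.mod_lt k hn⟩) n := by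
  intro k i
  obtain ⟨m, hm, hmod⟩ := exists_lt_add_mod_eq (σ.symm i).isLt k
  exact ⟨m, hm, (Equiv.eq_symm_apply σ).1 (Fin.ext hmod)⟩

variable {ι : Type*} [Fintype ι] [DecidableEq ι] {ψ : ι → ι → ℝ → ℝ}

/-- The sequence `p` is generated by descent steps in the coordinates selected by `l`. -/
def IsCoordinateDescent (ψ : ι → ι → ℝ → ℝ) (l : ℕ → ι) (p : ℕ → ι → ℝ) : Prop :=
  ∀ k, p (k + 1) = descentStep ψ (p k) (l k)

namespace IsCoordinateDescent

variable {l : ℕ → ι} {p : ℕ → ι → ℝ} {s : ι → ℝ} {N : ℕ}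

theorem dist_succ (hp : IsCoordinateDescent ψ l p) (k : ℕ) :
    dist (p k) (p (k + 1)) = |stepLength ψ (p k) (l k)| := by
  rw [hp k, dist_descentStep_self]

theorem antitone_dist (hp : IsCoordinateDescent ψ l p) (hψ : IsScalingFamily ψ)
    (hs : imbalance ψ s = 0) : Antitone fun k => dist (p k) s :=
  antitone_nat_of_succ_le fun k => by
    simpa only [hp k, descentStep_of_imbalance_eq_zero (congrFun hs (l k))] using
      hψ.dist_descentStep_le (p k) s (l k)

theorem mem_closedBall (hp : IsCoordinateDescent ψ l p) (hψ : IsScalingFamily ψ)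
    (hs : imbalance ψ s = 0) (k : ℕ) : p k ∈ Metric.closedBall s (dist (p 0) s) :=
  hp.antitone_dist hψ hs k.zero_le

theorem abs_stepLength_le (hp : IsCoordinateDescent ψ l p) (hψ : IsScalingFamily ψ)
    (hl : IsEssentiallyCyclic l N) (k : ℕ) (i : ι) :
    |stepLength ψ (p k) i| ≤ 2 * ∑ j ∈ range N, dist (p (k + j)) (p (k + j + 1)) := by
  obtain ⟨m, hm, rfl⟩ := hl k i
  calc |stepLength ψ (p k) (l (k + m))|
      ≤ |stepLength ψ (p (k + m)) (l (k + m))| + 2 * dist (p k) (p (k + m)) :=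
        hψ.abs_stepLength_le_add_two_mul_dist _ _ _
    _ ≤ 2 * dist (p (k + m)) (p (k + m + 1)) +
          2 * ∑ j ∈ range m, dist (p (k + j)) (p (k + j + 1)) := by
        gcongr
        · rw [← hp.dist_succ]
          exact le_mul_of_one_le_left dist_nonneg one_le_two
        · exact dist_le_range_sum_dist (fun j => p (k + j)) m
    _ = 2 * ∑ j ∈ range (m + 1), dist (p (k + j)) (p (k + j + 1)) := by
        rw [sum_range_succ]
        ring
    _ ≤ 2 * ∑ j ∈ range N, dist (p (k + j)) (p (k + j + 1)) := by
        gcongr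
        exact hm

theorem exists_mul_dist_sq_le_potential_sub (hp : IsCoordinateDescent ψ l p)
    (hψ : IsScalingFamily ψ) (hs : imbalance ψ s = 0) :
    ∃ c > 0, ∀ k, c * dist (p k) (p (k + 1)) ^ 2 ≤ potential ψ (p k) - potential ψ (p (k + 1)) := by
  obtain ⟨m, hm, hsums⟩ := hψ.exists_pos_le_sums (isCompact_closedBall s (dist (p 0) s))
  refine ⟨m / 2, half_pos hm, fun k => ?_⟩
  obtain ⟨hrow, hcol⟩ := hsums (p k) (hp.mem_closedBall hψ hs k) (l k)
  rw [hp.dist_succ, sq_abs, hp k]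
  exact hψ.potential_descentStep (p k) (l k) hrow hcol

theorem exists_norm_imbalance_le (hp : IsCoordinateDescent ψ l p) (hψ : IsScalingFamily ψ)
    (hs : imbalance ψ s = 0) (hl : IsEssentiallyCyclic l N) :
    ∃ M, ∀ k, ‖imbalance ψ (p k)‖ ≤
      M * ∑ j ∈ range N, dist (p (k + j)) (p (k + j + 1)) := by
  obtain ⟨M, hM⟩ := hψ.exists_norm_imbalance_le (isCompact_closedBall s (dist (p 0) s))
  refine ⟨M * 2, fun k => ?_⟩
  rw [mul_assoc]
  exact hM (p k) (hp.mem_closedBall hψ hs k) _ (by positivity) (hp.abs_stepLength_le hψ hl k)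

theorem tendsto_imbalance (hp : IsCoordinateDescent ψ l p) (hψ : IsScalingFamily ψ)
    (hs : imbalance ψ s = 0) (hl : IsEssentiallyCyclic l N) :
    Tendsto (fun k => imbalance ψ (p k)) atTop (𝓝 0) := by
  obtain ⟨c, hc, hdecrease⟩ := hp.exists_mul_dist_sq_le_potential_sub hψ hs
  obtain ⟨M, hM⟩ := hp.exists_norm_imbalance_le hψ hs hl
  have hdist : Tendsto (fun k => dist (p k) (p (k + 1))) atTop (𝓝 0) :=
    tendsto_zero_of_mul_sq_le_sub (a := fun k => potential ψ (p k) - potential ψ s) hc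
      (fun k => sub_nonneg.2 (potential_le_of_imbalance_eq_zero hψ.monotone hs (p k)))
      fun k => by simpa only [sub_sub_sub_cancel_right] using hdecrease k
  have hsum : Tendsto (fun k => M * ∑ j ∈ range N, dist (p (k + j)) (p (k + j + 1))) atTop
      (𝓝 0) := by
    simpa using (tendsto_finsetSum (range N) fun j _ =>
      hdist.comp (tendsto_add_atTop_nat j)).const_mul M
  exact squeeze_zero_norm hM hsum

theorem exists_tendsto (hp : IsCoordinateDescent ψ l p) (hψ : IsScalingFamily ψ)
    (hs : imbalance ψ s = 0) (hl : IsEssentiallyCyclic l N) :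
    ∃ q, imbalance ψ q = 0 ∧ Tendsto p atTop (𝓝 q) := by
  obtain ⟨q, -, φ, hφ, hq⟩ := (isCompact_closedBall s (dist (p 0) s)).tendsto_subseq
    (hp.mem_closedBall hψ hs)
  have hbal : imbalance ψ q = 0 :=
    tendsto_nhds_unique ((hψ.continuous_imbalance.tendsto q).comp hq)
      ((hp.tendsto_imbalance hψ hs hl).comp hφ.tendsto_atTop)
  refine ⟨q, hbal, tendsto_iff_dist_tendsto_zero.2 ?_⟩
  exact (tendsto_iff_tendsto_subseq_of_antitone (hp.antitone_dist hψ hbal) hφ.tendsto_atTop).2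
    (tendsto_iff_dist_tendsto_zero.1 hq)

theorem exists_tendsto_dist_le_mul_pow (hp : IsCoordinateDescent ψ l p) (hψ : IsScalingFamily ψ)
    (hs : imbalance ψ s = 0) (hl : IsEssentiallyCyclic l N) :
    ∃ q, imbalance ψ q = 0 ∧ Tendsto p atTop (𝓝 q) ∧
      ∃ C ρ : ℝ, 0 ≤ ρ ∧ ρ < 1 ∧ ∀ k, dist (p k) q ≤ C * ρ ^ k := by
  obtain ⟨q, hq, hlim⟩ := hp.exists_tendsto hψ hs hl
  obtain ⟨c, hc, hdecrease⟩ := hp.exists_mul_dist_sq_le_potential_sub hψ hq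
  obtain ⟨M, hM⟩ := hp.exists_norm_imbalance_le hψ hq hl
  obtain ⟨B, hB₀, hB⟩ := hψ.exists_potential_sub_le hq
  refine ⟨q, hq, hlim, exists_dist_le_mul_pow_of_le_mul_sq_sum hlim
    (a := fun k => potential ψ (p k) - potential ψ q) (b := B * M ^ 2)
    (fun k => sub_nonneg.2 (potential_le_of_imbalance_eq_zero hψ.monotone hq (p k)))
    (by positivity) hc hl.pos (fun k => ?_) ?_⟩
  · simpa only [sub_sub_sub_cancel_right] using hdecrease k
  · filter_upwards [hlim.eventually hB] with k hk
    rw [mul_assoc, ← mul_pow]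
    exact hk.trans (by gcongr; exact hM k)

end IsCoordinateDescent

end Convergence

section TruncatedScaling

variable {n : ℕ} {A L : Matrix (Fin n) (Fin n) ℝ} {U : Matrix (Fin n) (Fin n) EReal}

/-- The entry `(i, j)` of `T(D⁻¹ A D)` for `D = diag (e^{-p})`, as a function of `t = p i - p j`. -/
noncomputable def scaledEntry (A L : Matrix (Fin n) (Fin n) ℝ) (U : Matrix (Fin n) (Fin n) EReal)
    (i j : Fin n) (t : ℝ) : ℝ :=
  mid (A i j * Real.exp t) (U i j) (L i j)

theorem scaledEntry_pos {i j : Fin n} (h : 0 < L i j ∨ (0 < A i j ∧ 0 < U i j)) (t : ℝ) :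
    0 < scaledEntry A L U i j t :=
  mid_pos (h.imp_right fun ⟨hA, hU⟩ => ⟨mul_pos hA (Real.exp_pos t), hU⟩)

theorem isScalingFamily_scaledEntry (hL : ∀ i j, 0 ≤ L i j)
    (hrow : ∀ i, ∃ j, 0 < L i j ∨ (0 < A i j ∧ 0 < U i j))
    (hcol : ∀ j, ∃ i, 0 < L i j ∨ (0 < A i j ∧ 0 < U i j)) :
    IsScalingFamily (scaledEntry A L U) where
  profile i j := isScalingProfile_mid_mul_exp (A i j) (U i j) (hL i j)
  row_pos i := (hrow i).imp fun _ => scaledEntry_pos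
  col_pos j := (hcol j).imp fun _ => scaledEntry_pos

theorem truncation_diagonal_exp_neg (A L : Matrix (Fin n) (Fin n) ℝ)
    (U : Matrix (Fin n) (Fin n) EReal) (p : Fin n → ℝ) (i j : Fin n) :
    truncation L U ((Matrix.diagonal fun i => Real.exp (-(p i)))⁻¹ * A *
      Matrix.diagonal fun i => Real.exp (-(p i))) i j = scaledEntry A L U i j (p i - p j) := by
  have hinv : (Matrix.diagonal fun i => Real.exp (-(p i)))⁻¹ =
      Matrix.diagonal fun i => Real.exp (p i) := by
    refine Matrix.inv_eq_left_inv ?_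
    simp [Matrix.diagonal_mul_diagonal, ← Real.exp_add]
  rw [hinv, truncation, Matrix.of_apply, Matrix.mul_diagonal, Matrix.diagonal_mul, scaledEntry,
    sub_eq_add_neg, Real.exp_add, mul_comm (Real.exp (p i)), mul_assoc]

theorem isTruncScaling_exp_neg_iff (A L : Matrix (Fin n) (Fin n) ℝ)
    (U : Matrix (Fin n) (Fin n) EReal) (p : Fin n → ℝ) :
    IsTruncScaling A L U (fun i => Real.exp (-(p i))) ↔ imbalance (scaledEntry A L U) p = 0 := by
  simp only [IsTruncScaling, truncation_diagonal_exp_neg, funext_iff, imbalance, rowSum, colSum,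
    Pi.zero_apply, sub_eq_zero, Real.exp_pos, implies_true, true_and]

theorem IsTruncScaling.exists_imbalance_eq_zero {d : Fin n → ℝ} (hd : IsTruncScaling A L U d) :
    ∃ s, imbalance (scaledEntry A L U) s = 0 := by
  refine ⟨fun i => -Real.log (d i), (isTruncScaling_exp_neg_iff A L U _).1 ?_⟩
  simpa only [neg_neg, Real.exp_log (hd.1 _)] using hd

theorem truncUpdate_eq_add_stepLength (hψ : IsScalingFamily (scaledEntry A L U)) (p : Fin n → ℝ)
    (l : Fin n) : truncUpdate A L U p l = p l + stepLength (scaledEntry A L U) p l := by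
  have hcol : ∑ i, mid (A i l * Real.exp (p i)) (U i l * (Real.exp (p l) : EReal))
      (L i l * Real.exp (p l)) = colSum (scaledEntry A L U) p l * Real.exp (p l) := by
    rw [colSum, sum_mul]
    refine sum_congr rfl fun i _ => ?_
    rw [scaledEntry, ← mid_mul_coe _ _ _ (Real.exp_pos _), mul_assoc, ← Real.exp_add,
      sub_add_cancel]
  have hrow : ∑ j, mid (A l j * Real.exp (-(p j))) (U l j * (Real.exp (-(p l)) : EReal))
      (L l j * Real.exp (-(p l))) = rowSum (scaledEntry A L U) p l * Real.exp (-(p l)) := by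
    rw [rowSum, sum_mul]
    refine sum_congr rfl fun j _ => ?_
    rw [scaledEntry, ← mid_mul_coe _ _ _ (Real.exp_pos _), mul_assoc, ← Real.exp_add,
      ← sub_eq_add_neg, sub_sub_cancel_left]
  rw [truncUpdate, hcol, hrow, Real.log_mul (hψ.colSum_pos p l).ne' (Real.exp_pos _).ne',
    Real.log_mul (hψ.rowSum_pos p l).ne' (Real.exp_pos _).ne', Real.log_exp, Real.log_exp,
    stepLength]
  ring

end TruncatedScaling

theorem truncScaling_coordinate_descent_converges_general {n : ℕ}
    {A L : Matrix (Fin n) (Fin n) ℝ} {U : Matrix (Fin n) (Fin n) EReal}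
    (hL : ∀ i j, 0 ≤ L i j)
    (hrow : ∀ i, ∃ j, 0 < L i j ∨ (0 < A i j ∧ 0 < U i j))
    (hcol : ∀ j, ∃ i, 0 < L i j ∨ (0 < A i j ∧ 0 < U i j))
    (hexists : ∃ d : Fin n → ℝ, IsTruncScaling A L U d)
    {l : ℕ → Fin n} {N : ℕ} (hl : IsEssentiallyCyclic l N) {p : ℕ → Fin n → ℝ}
    (hstep : ∀ k, p (k + 1) = Function.update (p k) (l k) (truncUpdate A L U (p k) (l k))) :
    ∃ pstar : Fin n → ℝ,
      IsTruncScaling A L U (fun i => Real.exp (-(pstar i))) ∧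
      Tendsto p atTop (𝓝 pstar) ∧
      ∃ C ρ : ℝ, 0 ≤ ρ ∧ ρ < 1 ∧ ∀ k : ℕ, ‖p k - pstar‖ ≤ C * ρ ^ k := by
  have hψ := isScalingFamily_scaledEntry hL hrow hcol
  have hp : IsCoordinateDescent (scaledEntry A L U) l p := fun k => by
    rw [hstep k, truncUpdate_eq_add_stepLength hψ, descentStep]
  obtain ⟨d, hd⟩ := hexists
  obtain ⟨s, hs⟩ := hd.exists_imbalance_eq_zero
  obtain ⟨q, hq, hlim, C, ρ, hρ₀, hρ₁, hrate⟩ := hp.exists_tendsto_dist_le_mul_pow hψ hs hl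
  exact ⟨q, (isTruncScaling_exp_neg_iff A L U q).2 hq, hlim, C, ρ, hρ₀, hρ₁,
    fun k => dist_eq_norm (p k) q ▸ hrate k⟩

/-- If `A` has a truncated scaling, then the exact coordinate descent, started anywhere and selecting
the coordinates cyclically (in any fixed order `σ`), converges at least linearly to a vector `p*` such
that `D = diag(e^{-p*})` solves the truncated scaling problem, that is, `T(D⁻¹ A D)` has equal row and
column sums. The hypotheses `hrow`, `hcol` say that the sums under the logarithms are positive. -/
theorem truncScaling_coordinate_descent_converges {n : ℕ} (hn : 0 < n)
    (A L : Matrix (Fin n) (Fin n) ℝ) (U : Matrix (Fin n) (Fin n) EReal)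
    (hA : ∀ i j, 0 ≤ A i j) (hL : ∀ i j, 0 ≤ L i j) (hLU : ∀ i j, (L i j : EReal) ≤ U i j)
    (hrow : ∀ i, ∃ j, 0 < L i j ∨ (0 < A i j ∧ 0 < U i j))
    (hcol : ∀ j, ∃ i, 0 < L i j ∨ (0 < A i j ∧ 0 < U i j))
    (hexists : ∃ d : Fin n → ℝ, IsTruncScaling A L U d)
    (σ : Equiv.Perm (Fin n))
    (p : ℕ → Fin n → ℝ)
    (hstep : ∀ k : ℕ, p (k + 1) =
      Function.update (p k) (σ ⟨k % n, Nat.mod_lt k hn⟩)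
        (truncUpdate A L U (p k) (σ ⟨k % n, Nat.mod_lt k hn⟩))) :
    ∃ pstar : Fin n → ℝ,
      IsTruncScaling A L U (fun i => Real.exp (-(pstar i))) ∧
      Filter.Tendsto p Filter.atTop (nhds pstar) ∧
      ∃ C ρ : ℝ, 0 ≤ ρ ∧ ρ < 1 ∧ ∀ k : ℕ, ‖p k - pstar‖ ≤ C * ρ ^ k :=
  truncScaling_coordinate_descent_converges_general hL hrow hcol hexists
    (isEssentiallyCyclic_mod hn σ) hstep
end
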